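/- arXiv:2602.03642 — 6 statements merged into one kernel-verified Lean document; each statement's English description precedes it below -/
import Mathlib

section
/- Let K be a number field. Then there exist constants C > 0 and C′ > 0 (where C equals the residue at s = 1 of the Dedekind zeta function of K divided by the class number h_K) such that for every real x ≥ 2, |∑_{I nonzero principal ideal of O_K, N(I) ≤ x} 1/N(I) − C·log x| ≤ C′. -/
open NumberField

section


lemma aux_lat {ι : Type*} [Fintype ι] (Φ : (ι → ℝ) → ℝ) (L : NNReal) (hL : LipschitzWith L Φ)
    (hc : HasCompactSupport Φ) :
    ∃ V D : ℝ, ∀ k : ℕ, (Function.support fun m : ι → ℤ => Φ (fun i => (m i : ℝ) / 2 ^ k)).Finite ∧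
      |((2 : ℝ) ^ (Fintype.card ι * k))⁻¹ * ∑' m : ι → ℤ, Φ (fun i => (m i : ℝ) / 2 ^ k) - V|
        ≤ D / 2 ^ k := by
  classical
  obtain ⟨B, hB⟩ := hc.isCompact.isBounded.exists_norm_le
  obtain ⟨M, hM⟩ := exists_nat_gt B
  have hzero : ∀ x : ι → ℝ, ∀ i, (M : ℝ) ≤ |x i| → Φ x = 0 := by
    intro x i hi
    by_contra hne
    have h1 := hB x (subset_tsupport _ hne)
    have h2 := norm_le_pi_norm x i
    rw [Real.norm_eq_abs] at h2
    linarith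
  let box : ℕ → Finset (ι → ℤ) := fun k =>
    Fintype.piFinset (fun _ => Finset.Ico (-(M * 2 ^ k) : ℤ) (M * 2 ^ k))
  have hbox : ∀ k (m : ι → ℤ), m ∉ box k → Φ (fun i => (m i : ℝ) / 2 ^ k) = 0 := by
    intro k m hm
    simp only [box, Fintype.mem_piFinset, Finset.mem_Ico, not_forall] at hm
    obtain ⟨i, hi⟩ := hm
    refine hzero _ i ?_
    have h2 : (0 : ℝ) < 2 ^ k := by positivity
    rw [abs_div, abs_of_pos h2, le_div_iff₀ h2]
    have : (M * 2 ^ k : ℤ) ≤ |m i| := by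
      rw [le_abs]
      by_contra hcon
      push Not at hcon
      exact hi ⟨by linarith, by linarith⟩
    exact_mod_cast this
  let u : ℕ → ℝ := fun k => ((2 : ℝ) ^ (Fintype.card ι * k))⁻¹ *
    ∑ m ∈ box k, Φ (fun i => (m i : ℝ) / 2 ^ k)
  let cs : Finset (ι → ℤ) := Fintype.piFinset (fun _ => Finset.Ico (0 : ℤ) 2)
  have hsplit : ∀ (k : ℕ) (f : (ι → ℤ) → ℝ), ∑ m ∈ box (k + 1), f m =
      ∑ p ∈ box k ×ˢ cs, f (fun i => 2 * p.1 i + p.2 i) := by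
    intro k f
    symm
    refine Finset.sum_nbij' (fun p i => 2 * p.1 i + p.2 i)
      (fun m => (fun i => m i / 2, fun i => m i % 2)) ?_ ?_ ?_ ?_ ?_
    · rintro ⟨b, c⟩ h
      simp only [box, cs, Finset.mem_product, Fintype.mem_piFinset, Finset.mem_Ico, pow_succ] at h ⊢
      intro i
      have h1 := h.1 i
      have h2 := h.2 i
      rw [← mul_assoc]
      constructor <;> omega
    · intro m h
      simp only [box, cs, Finset.mem_product, Fintype.mem_piFinset, Finset.mem_Ico, pow_succ, ← mul_assoc] at h ⊢
      constructor
      · intro i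
        have h1 := h i
        constructor <;> omega
      · intro i
        constructor <;> omega
    · rintro ⟨b, c⟩ h
      simp only [box, cs, Finset.mem_product, Fintype.mem_piFinset, Finset.mem_Ico] at h
      ext i
      · have := h.2 i
        simp only
        omega
      · have := h.2 i
        simp only
        omega
    · intro m h
      ext i
      simp only
      omega
    · intros; rfl
  have hcs : cs.card = 2 ^ Fintype.card ι := by simp [cs]
  have hbc : ∀ k, ((box k).card : ℝ) = (2 * M * 2 ^ k) ^ Fintype.card ι := by
    intro k
    have : (box k).card = (2 * M * 2 ^ k) ^ Fintype.card ι := by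
      simp only [box, Fintype.card_piFinset, Int.card_Ico, Finset.prod_const, Finset.card_univ]
      congr 1
      have : (M * 2 ^ k - -(M * 2 ^ k) : ℤ) = ((2 * M * 2 ^ k : ℕ) : ℤ) := by push_cast; ring
      rw [this, Int.toNat_natCast]
    rw [this]; push_cast; ring
  set n := Fintype.card ι with hn
  have hstep : ∀ k, dist (u k) (u (k + 1)) ≤ ((2 * M) ^ n * L) / 2 / 2 ^ k := by
    intro k
    have e1 : u k = ((2 : ℝ) ^ (n * (k + 1)))⁻¹ *
        ∑ p ∈ box k ×ˢ cs, Φ (fun i => (p.1 i : ℝ) / 2 ^ k) := by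
      simp only [u, ← hn]
      rw [Finset.sum_product]
      simp only [Finset.sum_const, hcs, nsmul_eq_mul]
      rw [← Finset.mul_sum, ← mul_assoc]
      congr 1
      push_cast
      rw [mul_add, pow_add, mul_one]
      field_simp
    have e2 : u (k + 1) = ((2 : ℝ) ^ (n * (k + 1)))⁻¹ *
        ∑ p ∈ box k ×ˢ cs, Φ (fun i => (((2 * p.1 i + p.2 i : ℤ)) : ℝ) / 2 ^ (k + 1)) := by
      simp only [u, ← hn]
      rw [hsplit]
    rw [e1, e2, Real.dist_eq, ← mul_sub, ← Finset.sum_sub_distrib, abs_mul,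
      abs_of_pos (by positivity)]
    have hb : |∑ p ∈ box k ×ˢ cs, (Φ (fun i => (p.1 i : ℝ) / 2 ^ k) -
        Φ (fun i => (((2 * p.1 i + p.2 i : ℤ)) : ℝ) / 2 ^ (k + 1)))| ≤
        ((box k ×ˢ cs).card : ℝ) * (L * (1 / 2 ^ (k + 1))) := by
      refine (Finset.abs_sum_le_sum_abs _ _).trans ?_
      rw [← nsmul_eq_mul]
      refine Finset.sum_le_card_nsmul _ _ _ ?_
      rintro ⟨b, c⟩ h
      simp only [cs, Finset.mem_product, Fintype.mem_piFinset, Finset.mem_Ico] at h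
      rw [← Real.dist_eq]
      refine (hL.dist_le_mul _ _).trans ?_
      gcongr
      rw [dist_pi_le_iff (by positivity)]
      intro i
      have h1 : (0 : ℝ) ≤ c i := by exact_mod_cast (h.2 i).1
      have h2 : (c i : ℝ) ≤ 1 := by exact_mod_cast (by have := (h.2 i).2; omega : c i ≤ 1)
      rw [Real.dist_eq]
      have : (b i : ℝ) / 2 ^ k - ((2 * b i + c i : ℤ) : ℝ) / 2 ^ (k + 1) = - (c i / 2 ^ (k + 1)) := by
        push_cast
        rw [pow_succ]
        field_simp
        ring
      simp only
      rw [this, abs_neg, abs_of_nonneg (by positivity)]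
      gcongr
    refine (mul_le_mul_of_nonneg_left hb (by positivity)).trans (le_of_eq ?_)
    rw [Finset.card_product, Nat.cast_mul, hbc, hcs]
    push_cast
    rw [mul_pow _ ((2 : ℝ) ^ k), ← pow_mul, mul_add, pow_add, mul_one, mul_comm k n]
    field_simp
    ring
  obtain ⟨V, hV⟩ := cauchySeq_tendsto_of_complete (cauchySeq_of_le_geometric_two hstep)
  refine ⟨V, (2 * M) ^ n * L, fun k => ⟨?_, ?_⟩⟩
  · refine (box k).finite_toSet.subset ?_
    intro m hm
    by_contra hcon
    exact hm (hbox k m hcon)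
  · rw [tsum_eq_sum (hbox k)]
    have := dist_le_of_le_geometric_two_of_tendsto hstep hV k
    rwa [Real.dist_eq] at this
open NumberField.InfinitePlace NumberField.mixedEmbedding NumberField.mixedEmbedding.fundamentalCone
  NumberField.Units NumberField.Units.dirichletUnitTheorem

lemma aux_st_zero {c : ℝ} (h : 1 ≤ |c|) :
    Real.smoothTransition (c + 1) - Real.smoothTransition c = 0 := by
  rcases le_abs.mp h with h | h
  · rw [Real.smoothTransition.one_of_one_le h, Real.smoothTransition.one_of_one_le (by linarith)]
    simp
  · rw [Real.smoothTransition.zero_of_nonpos (x := c) (by linarith), Real.smoothTransition.zero_of_nonpos (by linarith)]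
    simp

noncomputable def auxRho (c : ℝ) : ℝ := Real.smoothTransition (c + 1) - Real.smoothTransition c

lemma auxRho_zero {c : ℝ} (h : 1 ≤ |c|) : auxRho c = 0 := aux_st_zero h

lemma auxRho_contDiff : ContDiff ℝ 1 auxRho := by
  unfold auxRho
  have := Real.smoothTransition.contDiff (n := 1)
  fun_prop

section
variable (K : Type*) [Field K] [NumberField K]

noncomputable def auxLog (x : mixedSpace K) : realSpace K :=
  fun w => (mult w : ℝ) * Real.log (normAtPlace w x)

noncomputable def auxCo (x : mixedSpace K) : realSpace K :=
  (completeBasis K).equivFun (auxLog K x)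

noncomputable def auxG (c : realSpace K) : ℝ :=
  auxRho (c w₀ / Real.log 2) * Real.exp (-(Module.finrank ℚ K * c w₀)) *
    ∏ i : Fin (rank K), auxRho (c (equivFinRank i).1)

open Classical in
noncomputable def auxPhi (x : mixedSpace K) : ℝ :=
  if ∀ w, normAtPlace w x ≠ 0 then auxG K (auxCo K x) else 0

lemma auxG_contDiff : ContDiff ℝ 1 (auxG K) := by
  unfold auxG
  have := auxRho_contDiff
  have h0 : ∀ w : InfinitePlace K, ContDiff ℝ 1 (fun c : realSpace K => c w) := fun w =>
    contDiff_apply ℝ ℝ w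
  refine ContDiff.mul (ContDiff.mul ?_ ?_) ?_
  · exact this.comp ((h0 _).div_const _)
  · exact ((contDiff_const.mul (h0 _)).neg).exp
  · exact contDiff_prod fun i _ => this.comp (h0 _)

lemma auxG_bound (c : realSpace K) (h : auxG K c ≠ 0) : ‖c‖ ≤ 1 := by
  unfold auxG at h
  rw [pi_norm_le_iff_of_nonneg zero_le_one]
  intro w
  rw [Real.norm_eq_abs]
  by_contra hcon
  push Not at hcon
  by_cases hw : w = w₀
  · subst hw
    rw [auxRho_zero] at h
    · simp at h
    · rw [abs_div, abs_of_pos (Real.log_pos (by norm_num)), le_div_iff₀ (Real.log_pos (by norm_num))]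
      have := Real.log_two_lt_d9
      linarith
  · apply h
    rw [Finset.prod_eq_zero (Finset.mem_univ (equivFinRank.symm ⟨w, hw⟩)), mul_zero]
    simp only [Equiv.apply_symm_apply]
    exact auxRho_zero hcon.le

lemma auxPhi_bound : ∃ B : ℝ, 0 < B ∧ ∀ x : mixedSpace K, auxPhi K x ≠ 0 →
    ∀ w, B⁻¹ ≤ normAtPlace w x ∧ normAtPlace w x ≤ B := by
  let e := (completeBasis K).equivFunL.symm
  refine ⟨Real.exp ‖(e : realSpace K →L[ℝ] realSpace K)‖, Real.exp_pos _, fun x hx w => ?_⟩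
  unfold auxPhi at hx
  split_ifs at hx with h0
  · have h1 := auxG_bound K _ hx
    have h2 : e (auxCo K x) = auxLog K x := by
      simp [e, auxCo]
    have h3 : ‖auxLog K x‖ ≤ ‖(e : realSpace K →L[ℝ] realSpace K)‖ := by
      rw [← h2]
      refine ((e : realSpace K →L[ℝ] realSpace K).le_opNorm _).trans ?_
      exact mul_le_of_le_one_right (norm_nonneg _) h1
    have h4 := (norm_le_pi_norm (auxLog K x) w).trans h3
    have hpos : 0 < normAtPlace w x := lt_of_le_of_ne (normAtPlace_nonneg w x) (h0 w).symm
    have h5 : |Real.log (normAtPlace w x)| ≤ ‖(e : realSpace K →L[ℝ] realSpace K)‖ := by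
      refine le_trans ?_ h4
      rw [auxLog, Real.norm_eq_abs, abs_mul, Nat.abs_cast]
      exact le_mul_of_one_le_left (abs_nonneg _) one_le_mult
    rw [abs_le] at h5
    rw [← Real.exp_neg, ← Real.le_log_iff_exp_le hpos, ← Real.log_le_iff_le_exp hpos]
    exact h5
  · exact absurd rfl hx

open scoped Classical in
lemma aux_normAtPlace_contDiffAt (w : InfinitePlace K) (x : mixedSpace K) (h : normAtPlace w x ≠ 0) :
    ContDiffAt ℝ 1 (fun y : mixedSpace K => normAtPlace w y) x := by
  by_cases hw : IsReal w
  · simp only [normAtPlace_apply_of_isReal hw] at h ⊢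
    have h1 : ContDiffAt ℝ 1 (fun y : mixedSpace K => y.1 ⟨w, hw⟩) x := by fun_prop
    exact h1.norm ℝ (by simpa using h)
  · rw [not_isReal_iff_isComplex] at hw
    simp only [normAtPlace_apply_of_isComplex hw] at h ⊢
    have h1 : ContDiffAt ℝ 1 (fun y : mixedSpace K => y.2 ⟨w, hw⟩) x := by fun_prop
    exact h1.norm ℝ (by simpa using h)

open scoped Classical in
lemma auxPhi_contDiff : ContDiff ℝ 1 (auxPhi K) := by
  rw [contDiff_iff_contDiffAt]
  intro x
  by_cases hx : ∀ w, normAtPlace w x ≠ 0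
  · have hev : auxPhi K =ᶠ[nhds x] fun y => auxG K (auxCo K y) := by
      have : ∀ᶠ y in nhds x, ∀ w, normAtPlace w y ≠ 0 := by
        rw [Filter.eventually_all]
        intro w
        exact (continuous_normAtPlace w).continuousAt.eventually_ne (hx w)
      filter_upwards [this] with y hy
      rw [auxPhi, if_pos hy]
    refine ContDiffAt.congr_of_eventuallyEq ?_ hev
    refine (auxG_contDiff K).contDiffAt.comp x ?_
    have : ContDiffAt ℝ 1 (auxLog K) x := by
      rw [contDiffAt_pi]
      intro w
      exact contDiffAt_const.mul ((aux_normAtPlace_contDiffAt K w x (hx w)).log (hx w))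
    exact (completeBasis K).equivFunL.contDiff.contDiffAt.comp x this
  · push Not at hx
    obtain ⟨w, hw⟩ := hx
    obtain ⟨B, hB, hb⟩ := auxPhi_bound K
    have : auxPhi K =ᶠ[nhds x] fun _ => 0 := by
      have h1 : ∀ᶠ y in nhds x, normAtPlace w y < B⁻¹ :=
        (continuous_normAtPlace w).continuousAt.eventually_lt continuousAt_const (by rw [hw]; positivity)
      filter_upwards [h1] with y hy
      by_contra hcon
      exact absurd (hb y hcon w).1 (not_le.mpr hy)
    exact contDiffAt_const.congr_of_eventuallyEq this

open scoped Classical in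
lemma auxPhi_hcs : HasCompactSupport (auxPhi K) := by
  obtain ⟨B, hB, hb⟩ := auxPhi_bound K
  refine HasCompactSupport.intro (isCompact_closedBall (0 : mixedSpace K) B) ?_
  intro x hx
  by_contra hcon
  apply hx
  rw [mem_closedBall_zero_iff, norm_eq_sup'_normAtPlace]
  exact Finset.sup'_le _ _ fun w _ => (hb x hcon w).2

open scoped Classical in
lemma auxPhi_lat : ∃ V D : ℝ, ∀ k : ℕ,
    (Function.support fun a : 𝓞 K => auxPhi K (((2 : ℝ) ^ k)⁻¹ • mixedEmbedding K a)).Finite ∧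
    |((2 : ℝ) ^ (Module.finrank ℚ K * k))⁻¹ *
      ∑' a : 𝓞 K, auxPhi K (((2 : ℝ) ^ k)⁻¹ • mixedEmbedding K a) - V| ≤ D / 2 ^ k := by
  let b := RingOfIntegers.basis K
  let e : (Module.Free.ChooseBasisIndex ℤ (𝓞 K) → ℝ) ≃L[ℝ] mixedSpace K := (latticeBasis K).equivFunL.symm
  have hcs : HasCompactSupport (auxPhi K ∘ e) := (auxPhi_hcs K).comp_homeomorph e.toHomeomorph
  obtain ⟨L, hL⟩ := ContDiff.lipschitzWith_of_hasCompactSupport hcs ((auxPhi_contDiff K).comp e.contDiff) one_ne_zero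
  obtain ⟨V, D, h⟩ := aux_lat (auxPhi K ∘ e) L hL hcs
  refine ⟨V, D, fun k => ?_⟩
  have key : ∀ m : Module.Free.ChooseBasisIndex ℤ (𝓞 K) → ℤ,
      (auxPhi K ∘ e) (fun i => (m i : ℝ) / 2 ^ k) =
      auxPhi K (((2 : ℝ) ^ k)⁻¹ • mixedEmbedding K (b.equivFun.symm m : 𝓞 K)) := by
    intro m
    simp only [Function.comp_apply]
    congr 1
    have : e (fun i => (m i : ℝ) / 2 ^ k) = ∑ i, ((m i : ℝ) / 2 ^ k) • latticeBasis K i := by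
      simp only [e]
      exact (latticeBasis K).equivFun_symm_apply _
    rw [this, Module.Basis.equivFun_symm_apply]
    simp only [map_sum, Finset.smul_sum, latticeBasis_apply, integralBasis_apply]
    refine Finset.sum_congr rfl fun i _ => ?_
    rw [zsmul_eq_mul, map_mul, map_intCast, map_mul, map_intCast, div_eq_inv_mul, mul_smul,
      ← zsmul_eq_mul]
    congr 1
    exact (Int.cast_smul_eq_zsmul ℝ (m i) _)
  obtain ⟨h1, h2⟩ := h k
  simp only [key] at h1 h2
  rw [← Module.finrank_eq_card_chooseBasisIndex, RingOfIntegers.rank] at h2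
  constructor
  · refine (h1.image (b.equivFun.symm)).subset ?_
    intro a ha
    have he : b.equivFun.symm (b.equivFun a) = a := b.equivFun.symm_apply_apply a
    refine ⟨b.equivFun a, ?_, he⟩
    rw [Function.mem_support] at ha ⊢
    rwa [he]
  · have h3 := b.equivFun.symm.toEquiv.tsum_eq
      (fun a : 𝓞 K => auxPhi K (((2 : ℝ) ^ k)⁻¹ • mixedEmbedding K a))
    rw [← h3]
    exact h2
end
section
variable (K : Type*) [Field K] [NumberField K]

lemma auxRho_sum {r : ℕ} (c : Fin r → ℝ) :
    ∃ s : Finset (Fin r → ℤ), (∀ e ∉ s, ∏ i, auxRho (c i + e i) = 0) ∧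
      ∑ e ∈ s, ∏ i, auxRho (c i + e i) = 1 := by
  obtain ⟨M, hM⟩ := exists_nat_gt (‖c‖ + 1)
  have hc : ∀ i, |c i| ≤ ‖c‖ := fun i => norm_le_pi_norm c i
  refine ⟨Fintype.piFinset fun _ => Finset.Ico (-(M : ℤ)) M, ?_, ?_⟩
  · intro e he
    simp only [Fintype.mem_piFinset, not_forall, Finset.mem_Ico] at he
    obtain ⟨i, hi⟩ := he
    refine Finset.prod_eq_zero (Finset.mem_univ i) (auxRho_zero ?_)
    have := abs_le.mp (hc i)
    by_cases h : (M : ℤ) ≤ e i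
    · have : (M : ℝ) ≤ e i := by exact_mod_cast h
      rw [le_abs]; left; linarith
    · have h' : e i ≤ -(M : ℤ) := by
        by_contra hcon
        exact hi ⟨by omega, by omega⟩
      have : (e i : ℝ) ≤ -M := by exact_mod_cast h'
      rw [le_abs]; right; linarith
  · rw [← Finset.prod_univ_sum (t := fun _ => Finset.Ico (-(M : ℤ)) M)
      (f := fun i (j : ℤ) => auxRho (c i + j))]
    refine Finset.prod_eq_one fun i _ => ?_
    have h1 : ∑ j ∈ Finset.Ico (-(M : ℤ)) M, auxRho (c i + j) =
        ∑ j ∈ Finset.range (2 * M), auxRho (c i + ((j : ℝ) - M)) := by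
      refine Finset.sum_nbij' (fun j => (j + M).toNat) (fun j => (j : ℤ) - M) ?_ ?_ ?_ ?_ ?_
      · intro j hj; simp only [Finset.mem_Ico, Finset.mem_range] at *; omega
      · intro j hj; simp only [Finset.mem_Ico, Finset.mem_range] at *; omega
      · intro j hj; simp only [Finset.mem_Ico] at *; omega
      · intro j hj; simp only [Finset.mem_range] at *; omega
      · intro j hj
        simp only [Finset.mem_Ico] at hj
        have : (((j + M).toNat : ℤ) : ℝ) = ((j + M : ℤ) : ℝ) := by
          rw [Int.toNat_of_nonneg (by omega)]
        rw [Int.cast_natCast] at this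
        rw [this]; push_cast; ring_nf
    rw [h1]
    have h2 := Finset.sum_range_sub (fun j : ℕ => Real.smoothTransition (c i + ((j : ℝ) - M))) (2 * M)
    have h3 : ∀ j : ℕ, auxRho (c i + ((j : ℝ) - M)) =
      Real.smoothTransition (c i + (((j + 1 : ℕ) : ℝ) - M)) - Real.smoothTransition (c i + ((j : ℝ) - M)) := by
      intro j; unfold auxRho; push_cast; ring_nf
    simp only [h3]
    rw [h2]
    have := abs_le.mp (hc i)
    rw [Real.smoothTransition.one_of_one_le, Real.smoothTransition.zero_of_nonpos]
    · simp
    · push_cast; linarith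
    · push_cast; linarith

lemma auxCo_mul (x y : mixedSpace K) (hx : ∀ w, normAtPlace w x ≠ 0) (hy : ∀ w, normAtPlace w y ≠ 0) :
    auxCo K (x * y) = auxCo K x + auxCo K y := by
  have : auxLog K (x * y) = auxLog K x + auxLog K y := by
    ext w
    simp only [auxLog, map_mul, Pi.add_apply]
    rw [Real.log_mul (hx w) (hy w)]; ring
  rw [auxCo, this, map_add]; rfl

open scoped Classical in
lemma auxCo_smul (x : mixedSpace K) (hx : ∀ w, normAtPlace w x ≠ 0) (c : ℝ) (hc : 0 < c) :
    auxCo K (c • x) = auxCo K x + Pi.single w₀ (Real.log c) := by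
  have : auxLog K (c • x) = auxLog K x + Real.log c • completeBasis K w₀ := by
    ext w
    simp only [auxLog, normAtPlace_smul, Pi.add_apply, completeBasis_apply_of_eq, Pi.smul_apply, smul_eq_mul]
    rw [abs_of_pos hc, Real.log_mul hc.ne' (hx w)]; ring
  rw [auxCo, this, map_add, map_smul]
  ext w
  simp only [Pi.add_apply, Pi.smul_apply, Module.Basis.equivFun_self]
  by_cases h : w = w₀
  · subst h; simp [auxCo]
  · simp [auxCo, h, Ne.symm h]

lemma aux_nz {a : K} (ha : a ≠ 0) (w : InfinitePlace K) : normAtPlace w (mixedEmbedding K a) ≠ 0 := by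
  rw [normAtPlace_apply]
  exact (map_ne_zero w).mpr ha

lemma auxLog_unit (ζ : torsion K) (e : Fin (rank K) → ℤ) :
    auxLog K (mixedEmbedding K ((ζ * ∏ i, (fundSystem K i) ^ (e i) : (𝓞 K)ˣ) : 𝓞 K)) =
      ∑ i, (e i : ℝ) • completeBasis K (equivFinRank i).1 := by
  ext w
  simp only [completeBasis_apply_of_ne, auxLog, normAtPlace_apply, Finset.sum_apply, Pi.smul_apply,
    expMap_symm_apply, smul_eq_mul, Equiv.symm_apply_apply]
  have h1 : w ((ζ : (𝓞 K)ˣ) : 𝓞 K) = 1 := (mem_torsion K).mp ζ.2 w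
  have h2 : (((ζ * ∏ i, (fundSystem K i) ^ (e i) : (𝓞 K)ˣ) : 𝓞 K) : K) =
     ((ζ : (𝓞 K)ˣ) : K) * ∏ i, ((fundSystem K i : K)) ^ (e i) := by
    push_cast
    congr 1
    exact Finset.prod_congr rfl fun i _ => coe_zpow _ _
  rw [h2, map_mul, h1, one_mul, map_prod, Real.log_prod, Finset.mul_sum]
  · refine Finset.sum_congr rfl fun i _ => ?_
    rw [map_zpow₀, Real.log_zpow]; ring
  · intro i _
    rw [map_zpow₀]
    exact zpow_ne_zero _ ((map_ne_zero w).mpr (coe_ne_zero _))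

lemma auxCo_unit (ζ : torsion K) (e : Fin (rank K) → ℤ) :
    auxCo K (mixedEmbedding K ((ζ * ∏ i, (fundSystem K i) ^ (e i) : (𝓞 K)ˣ) : 𝓞 K)) w₀ = 0 ∧
    ∀ j, auxCo K (mixedEmbedding K ((ζ * ∏ i, (fundSystem K i) ^ (e i) : (𝓞 K)ˣ) : 𝓞 K))
      (equivFinRank j).1 = e j := by
  classical
  rw [auxCo, auxLog_unit, map_sum]
  simp only [map_smul, Module.Basis.equivFun_self, Finset.sum_apply, Pi.smul_apply, smul_eq_mul]
  constructor
  · refine Finset.sum_eq_zero fun i _ => ?_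
    rw [if_neg (equivFinRank i).2, mul_zero]
  · intro j
    rw [Finset.sum_eq_single j]
    · simp
    · intro i _ hi
      rw [if_neg, mul_zero]
      intro h
      exact hi (equivFinRank.injective (Subtype.ext h))
    · simp

lemma auxCo_w0 (a : 𝓞 K) (ha : a ≠ 0) : auxCo K (mixedEmbedding K a) w₀ =
    Real.log (Ideal.absNorm (Ideal.span {a})) / Module.finrank ℚ K := by
  classical
  have ha' : (a : K) ≠ 0 := RingOfIntegers.coe_ne_zero_iff.mpr ha
  set x := mixedEmbedding K (a : K) with hx
  have h1 := sum_expMap_symm_apply ha'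
  have h2 : auxLog K x = ∑ w, auxCo K x w • completeBasis K w := by
    rw [auxCo, (completeBasis K).sum_equivFun]
  have h3 : ∑ w, auxLog K x w = Real.log (|Algebra.norm ℚ (a : K)| : ℚ) := h1
  have h4 : ∀ v : InfinitePlace K, ∑ w, completeBasis K v w = if v = w₀ then (Module.finrank ℚ K : ℝ) else 0 := by
    intro v
    split_ifs with h
    · rw [h, completeBasis_apply_of_eq, ← Nat.cast_sum, sum_mult_eq]
    · rw [completeBasis_apply_of_ne K ⟨v, h⟩, sum_expMap_symm_apply (coe_ne_zero _)]
      simp [Units.norm]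
  have h5 : ∑ w, auxLog K x w = auxCo K x w₀ * Module.finrank ℚ K := by
    conv_lhs => rw [h2]
    simp only [Finset.sum_apply, Pi.smul_apply, smul_eq_mul]
    rw [Finset.sum_comm]
    simp only [← Finset.mul_sum, h4]
    simp
  have hn : (Module.finrank ℚ K : ℝ) ≠ 0 := Nat.cast_ne_zero.mpr Module.finrank_pos.ne'
  rw [eq_div_iff hn, ← h5, h3]
  congr 1
  rw [Ideal.absNorm_span_singleton]
  have := Algebra.coe_norm_int a
  rw [← this]
  push_cast
  rw [Nat.cast_natAbs]
  simp

noncomputable def auxUnitEquiv : torsion K × (Fin (rank K) → ℤ) ≃ (𝓞 K)ˣ :=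
  Equiv.ofBijective (fun ζe => ζe.1 * ∏ i, (fundSystem K i) ^ (ζe.2 i)) <| by
    rw [Function.bijective_iff_existsUnique]
    intro x
    obtain ⟨y, hy, h⟩ := exist_unique_eq_mul_prod K x
    exact ⟨y, hy.symm, fun z hz => h z hz.symm⟩

noncomputable def auxg (t : ℝ) : ℝ :=
  auxRho (t / Real.log 2) * Real.exp (-(Module.finrank ℚ K * t))

lemma aux_unit_sum (a : 𝓞 K) (ha : a ≠ 0) (c : ℝ) (hc : 0 < c) :
    ∑' u : (𝓞 K)ˣ, auxPhi K (c • mixedEmbedding K (((u : 𝓞 K) * a : 𝓞 K))) =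
      torsionOrder K * auxg K (Real.log (Ideal.absNorm (Ideal.span {a})) / Module.finrank ℚ K + Real.log c) := by
  classical
  have ha' : (a : K) ≠ 0 := RingOfIntegers.coe_ne_zero_iff.mpr ha
  rw [← (auxUnitEquiv K).tsum_eq]
  set t := Real.log (Ideal.absNorm (Ideal.span {a})) / Module.finrank ℚ K + Real.log c with ht
  have key : ∀ p : torsion K × (Fin (rank K) → ℤ),
    auxPhi K (c • mixedEmbedding K ((((auxUnitEquiv K p : (𝓞 K)ˣ) : 𝓞 K) * a : 𝓞 K))) =
      auxg K t * ∏ i, auxRho (auxCo K (mixedEmbedding K a) (equivFinRank i).1 + p.2 i) := by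
    rintro ⟨ζ, e⟩
    have hu : (((auxUnitEquiv K (ζ, e) : (𝓞 K)ˣ) : 𝓞 K) : K) ≠ 0 := coe_ne_zero _
    have h1 : mixedEmbedding K ((((auxUnitEquiv K (ζ, e) : (𝓞 K)ˣ) : 𝓞 K) * a : 𝓞 K)) =
       mixedEmbedding K ((auxUnitEquiv K (ζ, e) : (𝓞 K)ˣ) : 𝓞 K) * mixedEmbedding K a := by
      rw [← map_mul]; rfl
    have hnz : ∀ w, normAtPlace w (mixedEmbedding K ((auxUnitEquiv K (ζ, e) : (𝓞 K)ˣ) : 𝓞 K) * mixedEmbedding K a) ≠ 0 := by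
      intro w
      rw [map_mul]
      exact mul_ne_zero (aux_nz K hu w) (aux_nz K ha' w)
    rw [h1, auxPhi, if_pos, auxCo_smul K _ hnz c hc, auxCo_mul K _ _ (aux_nz K hu) (aux_nz K ha')]
    · obtain ⟨h2, h3⟩ := auxCo_unit K ζ e
      change auxCo K (mixedEmbedding K ((auxUnitEquiv K (ζ, e) : (𝓞 K)ˣ) : 𝓞 K)) w₀ = 0 at h2
      change ∀ j, auxCo K (mixedEmbedding K ((auxUnitEquiv K (ζ, e) : (𝓞 K)ˣ) : 𝓞 K)) (equivFinRank j).1 = e j at h3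
      rw [auxG, auxg]
      simp only [Pi.add_apply, h2, h3, auxCo_w0 K a ha, Pi.single_eq_same, zero_add, ← ht]
      congr 1
      refine Finset.prod_congr rfl fun i _ => ?_
      rw [Pi.single_eq_of_ne (equivFinRank i).2, add_zero, add_comm]
    · intro w
      rw [normAtPlace_smul]
      exact mul_ne_zero (abs_pos.mpr hc.ne').ne' (hnz w)
  simp only [key]
  have : Fintype (torsion K) := Fintype.ofFinite _
  obtain ⟨s, hs1, hs2⟩ := auxRho_sum (fun i => auxCo K (mixedEmbedding K a) (equivFinRank i).1)
  rw [tsum_eq_sum (s := Finset.univ ×ˢ s), Finset.sum_product]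
  · simp only [← Finset.mul_sum, hs2, Finset.sum_const, Finset.card_univ, mul_one, nsmul_eq_mul]
    rw [torsionOrder, Nat.card_eq_fintype_card]
  · rintro ⟨ζ, e⟩ h
    simp only [Finset.mem_product, Finset.mem_univ, true_and] at h
    rw [hs1 e h, mul_zero]

lemma aux_ideal_sum (c : ℝ) (hc : 0 < c)
    (hfin : (Function.support fun a : 𝓞 K => auxPhi K (c • mixedEmbedding K a)).Finite) :
    ∑' a : 𝓞 K, auxPhi K (c • mixedEmbedding K a) =
    ∑' I : {I : Ideal (𝓞 K) // I ≠ ⊥ ∧ I.IsPrincipal}, torsionOrder K *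
      auxg K (Real.log (Ideal.absNorm I.1) / Module.finrank ℚ K + Real.log c) := by
  let P := {I : Ideal (𝓞 K) // I ≠ ⊥ ∧ I.IsPrincipal}
  have hgen : ∀ I : P, ∃ a : 𝓞 K, a ≠ 0 ∧ I.1 = Ideal.span {a} := by
    rintro ⟨I, h0, ⟨a, ha⟩⟩
    refine ⟨a, ?_, ha⟩
    rintro rfl
    exact h0 (by rw [ha]; simp)
  choose gen hg0 hg using hgen
  let f : P × (𝓞 K)ˣ → 𝓞 K := fun p => p.2 * gen p.1
  have hinj : Function.Injective f := by
    rintro ⟨I, u⟩ ⟨J, v⟩ h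
    simp only [f] at h
    have h1 : I = J := by
      apply Subtype.ext
      rw [hg I, hg J, Ideal.span_singleton_eq_span_singleton]
      exact (associated_unit_mul_left _ _ u.isUnit).symm.trans
        (h ▸ (associated_unit_mul_left _ _ v.isUnit))
    subst h1
    have h2 := mul_right_cancel₀ (hg0 I) h
    rw [Prod.mk.injEq]
    exact ⟨rfl, Units.ext h2⟩
  have hrange : Function.support (fun a : 𝓞 K => auxPhi K (c • mixedEmbedding K a)) ⊆ Set.range f := by
    intro a ha
    have ha0 : a ≠ 0 := by
      rintro rfl
      apply ha
      simp only [map_zero, smul_zero]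
      rw [auxPhi, if_neg]
      push Not
      exact ⟨w₀, map_zero _⟩
    let I : P := ⟨Ideal.span {a}, by simpa using ha0, ⟨a, rfl⟩⟩
    have h1 := hg I
    rw [Ideal.span_singleton_eq_span_singleton] at h1
    obtain ⟨u, hu⟩ := h1.symm
    exact ⟨(I, u), by simp only [f]; rw [mul_comm, hu]⟩
  rw [← hinj.tsum_eq hrange, Summable.tsum_prod]
  · refine tsum_congr fun I => ?_
    rw [hg I, ← aux_unit_sum K _ (hg0 I) c hc]
  · apply summable_of_hasFiniteSupport
    exact hfin.preimage hinj.injOn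
end

section
lemma auxGenSum {P : Type*} (N : P → ℕ) (hfin : ∀ m, {I | N I ≤ m}.Finite) (f : P → ℝ) (x : ℝ)
    (hf : ∀ I, x < N I → f I = 0) : Summable f := by
  apply summable_of_hasFiniteSupport
  refine (hfin ⌊x⌋₊).subset ?_
  intro I hI
  have : (N I : ℝ) ≤ x := by
    by_contra h
    exact hI (hf I (not_le.mp h))
  exact Nat.le_floor this

open Classical in
lemma auxGenBound {P : Type*} (N : P → ℕ) (hN : ∀ I, 1 ≤ N I) (hfin : ∀ m, {I | N I ≤ m}.Finite)
    (b : ℝ) (hb : 0 < b) (V D : ℝ)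
    (h : ∀ k : ℕ, |∑' I, auxRho (Real.log (N I) / b - k) * (N I : ℝ)⁻¹ - V| ≤ D / 2 ^ k) :
    ∃ C', ∀ x : ℝ, 1 ≤ x →
      |∑' I, (if (N I : ℝ) ≤ x then (N I : ℝ)⁻¹ else 0) - V / b * Real.log x| ≤ C' := by
  have hl : ∀ I, 0 ≤ Real.log (N I) / b := fun I =>
    div_nonneg (Real.log_nonneg (by exact_mod_cast hN I)) hb.le
  have hlt : ∀ I (t : ℝ), Real.exp (t * b) < N I → t < Real.log (N I) / b := by
    intro I t ht
    rw [lt_div_iff₀ hb, Real.lt_log_iff_exp_lt]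
    · exact ht
    · exact_mod_cast hN I
  have hsum : ∀ k : ℕ, Summable fun I => auxRho (Real.log (N I) / b - k) * (N I : ℝ)⁻¹ := by
    intro k
    refine auxGenSum N hfin _ (Real.exp ((k + 1) * b)) fun I hI => ?_
    have := hlt I _ hI
    rw [auxRho_zero, zero_mul]
    rw [le_abs]; left; linarith
  have htel : ∀ (M : ℕ) (l : ℝ), 0 ≤ l → ∑ k ∈ Finset.range M, auxRho (l - k) =
      1 - Real.smoothTransition (l + 1 - M) := by
    intro M l hl
    induction M with
    | zero => simp [Real.smoothTransition.one_of_one_le (by linarith : 1 ≤ l + 1)]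
    | succ M ih =>
      rw [Finset.sum_range_succ, ih, auxRho]
      push_cast
      rw [show l - M + 1 = l + 1 - M by ring, show l + 1 - (M + 1) = l - M by ring]
      ring
  have hswap : ∀ M : ℕ, ∑ k ∈ Finset.range M, ∑' I, auxRho (Real.log (N I) / b - k) * (N I : ℝ)⁻¹ =
      ∑' I, (1 - Real.smoothTransition (Real.log (N I) / b + 1 - M)) * (N I : ℝ)⁻¹ := by
    intro M
    rw [← Summable.tsum_finsetSum (fun k _ => hsum k)]
    refine tsum_congr fun I => ?_
    rw [← Finset.sum_mul, htel M _ (hl I)]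
  have hsum2 : ∀ M : ℕ, Summable fun I =>
      (1 - Real.smoothTransition (Real.log (N I) / b + 1 - M)) * (N I : ℝ)⁻¹ := by
    intro M
    have := summable_sum (s := Finset.range M) (fun k _ => hsum k)
    refine this.congr fun I => ?_
    rw [← Finset.sum_mul, htel M _ (hl I)]
  have hsum3 : ∀ x : ℝ, Summable fun I => (if (N I : ℝ) ≤ x then (N I : ℝ)⁻¹ else 0) := by
    intro x
    exact auxGenSum N hfin _ x fun I hI => if_neg (not_le.mpr hI)
  have hbd : ∀ M : ℕ, |∑ k ∈ Finset.range M, ∑' I, auxRho (Real.log (N I) / b - k) * (N I : ℝ)⁻¹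
      - M * V| ≤ 2 * D := by
    intro M
    have hD : 0 ≤ D := by
      have := (abs_nonneg _).trans (h 0)
      simpa using this
    have e1 : ∑ k ∈ Finset.range M, ∑' I, auxRho (Real.log (N I) / b - k) * (N I : ℝ)⁻¹ - M * V =
      ∑ k ∈ Finset.range M, (∑' I, auxRho (Real.log (N I) / b - k) * (N I : ℝ)⁻¹ - V) := by
      rw [Finset.sum_sub_distrib]; simp
    rw [e1]
    refine (Finset.abs_sum_le_sum_abs _ _).trans ((Finset.sum_le_sum fun k _ => h k).trans ?_)
    have e2 : ∀ M : ℕ, ∑ k ∈ Finset.range M, D / 2 ^ k = 2 * D - 2 * D / 2 ^ M := by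
      intro M
      induction M with
      | zero => simp
      | succ M ih => rw [Finset.sum_range_succ, ih, pow_succ]; field_simp; ring
    rw [e2]
    have : 0 ≤ 2 * D / 2 ^ M := by positivity
    linarith
  refine ⟨2 * D + 3 * |V|, fun x hx => ?_⟩
  set y := Real.log x / b with hy
  have hy0 : 0 ≤ y := div_nonneg (Real.log_nonneg hx) hb.le
  have hx0 : 0 < x := by linarith
  have hle : ∀ I, (N I : ℝ) ≤ x ↔ Real.log (N I) / b ≤ y := by
    intro I
    have : (0 : ℝ) < N I := by exact_mod_cast hN I
    rw [hy, div_le_div_iff_of_pos_right hb, Real.log_le_log_iff this hx0]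
  set M := ⌊y⌋₊ with hM
  have hM1 : (M : ℝ) ≤ y := Nat.floor_le hy0
  have hM2 : y < M + 1 := Nat.lt_floor_add_one y
  have hlow : ∑ k ∈ Finset.range M, ∑' I, auxRho (Real.log (N I) / b - k) * (N I : ℝ)⁻¹ ≤
      ∑' I, (if (N I : ℝ) ≤ x then (N I : ℝ)⁻¹ else 0) := by
    rw [hswap]
    refine (hsum2 M).tsum_le_tsum (fun I => ?_) (hsum3 x)
    have hp : (0 : ℝ) ≤ (N I : ℝ)⁻¹ := by positivity
    split_ifs with hI
    · have := Real.smoothTransition.nonneg (Real.log (N I) / b + 1 - M)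
      nlinarith
    · rw [hle, not_le] at hI
      rw [Real.smoothTransition.one_of_one_le (by linarith)]; simp
  have hhigh : ∑' I, (if (N I : ℝ) ≤ x then (N I : ℝ)⁻¹ else 0) ≤
      ∑ k ∈ Finset.range (M + 2), ∑' I, auxRho (Real.log (N I) / b - k) * (N I : ℝ)⁻¹ := by
    rw [hswap]
    refine (hsum3 x).tsum_le_tsum (fun I => ?_) (hsum2 (M + 2))
    have hp : (0 : ℝ) ≤ (N I : ℝ)⁻¹ := by positivity
    split_ifs with hI
    · rw [hle] at hI
      rw [Real.smoothTransition.zero_of_nonpos (by push_cast; linarith)]; simp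
    · have := Real.smoothTransition.le_one (Real.log (N I) / b + 1 - (M + 2 : ℕ))
      exact mul_nonneg (by linarith) hp
  have b1 := abs_le.mp (hbd M)
  have b2 := abs_le.mp (hbd (M + 2))
  push_cast at b2
  have e : V / b * Real.log x = y * V := by rw [hy]; ring
  rw [e]
  have v1 := neg_abs_le V
  have v2 := le_abs_self V
  have w1 : |(y - M) * V| ≤ |V| := by
    rw [abs_mul, abs_of_nonneg (by linarith)]
    have := abs_nonneg V
    nlinarith
  have w1 := abs_le.mp w1
  rw [abs_le]
  constructor <;> linarith

open Classical in
lemma auxGenConst {P : Type*} (N : P → ℕ) (hN : ∀ I, 1 ≤ N I) (hfin : ∀ m, {I | N I ≤ m}.Finite)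
    (C0 C1 C' : ℝ)
    (h0 : ∀ x : ℝ, 1 ≤ x →
      |∑' I, (if (N I : ℝ) ≤ x then (N I : ℝ)⁻¹ else 0) - C0 * Real.log x| ≤ C')
    (h1 : Filter.Tendsto (fun x : ℝ => (∑' I, (if (N I : ℝ) ≤ x then (1 : ℝ) else 0)) / x) Filter.atTop
      (nhds C1)) : C0 = C1 := by
  set S : ℝ → ℝ := fun x => ∑' I, (if (N I : ℝ) ≤ x then (N I : ℝ)⁻¹ else 0) with hS
  set A : ℝ → ℝ := fun x => ∑' I, (if (N I : ℝ) ≤ x then (1 : ℝ) else 0) with hA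
  have hsS : ∀ x : ℝ, Summable fun I => (if (N I : ℝ) ≤ x then (N I : ℝ)⁻¹ else 0) := by
    intro x
    exact auxGenSum N hfin _ x fun I hI => if_neg (not_le.mpr hI)
  have hsA : ∀ x : ℝ, Summable fun I => (if (N I : ℝ) ≤ x then (1 : ℝ) else 0) := by
    intro x
    exact auxGenSum N hfin _ x fun I hI => if_neg (not_le.mpr hI)
  have hneg : ∀ I, ¬ (N I : ℝ) ≤ ((0 : ℕ) : ℝ) := by
    intro I h
    have := hN I
    have : N I ≤ 0 := by exact_mod_cast h
    omega
  have hS0 : S (0 : ℕ) = 0 := by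
    simp only [hS, if_neg (hneg _), tsum_zero]
  have hA0 : A (0 : ℕ) = 0 := by
    simp only [hA, if_neg (hneg _), tsum_zero]
  have hstep : ∀ M : ℕ, S (M + 1 : ℕ) = S M + (A (M + 1 : ℕ) - A M) * ((M : ℝ) + 1)⁻¹ := by
    intro M
    rw [← sub_eq_iff_eq_add']
    simp only [hS, hA]
    rw [← (hsS _).tsum_sub (hsS _), ← (hsA _).tsum_sub (hsA _), ← tsum_mul_right]
    refine tsum_congr fun I => ?_
    simp only [Nat.cast_le]
    by_cases h : N I ≤ M
    · rw [if_pos (by omega), if_pos h, if_pos (by omega), if_pos h]; simp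
    · by_cases h' : N I ≤ M + 1
      · rw [if_pos h', if_neg h, if_pos h', if_neg h]
        have : N I = M + 1 := by omega
        rw [this]; push_cast; ring
      · rw [if_neg h', if_neg h, if_neg h', if_neg h]; simp
  have hid : ∀ M : ℕ, S M = A M / M + ∑ m ∈ Finset.range M, A m / m * (1 / ((m : ℝ) + 1)) := by
    intro M
    induction M with
    | zero => rw [hS0, hA0]; simp
    | succ M ih =>
      rw [hstep, ih, Finset.sum_range_succ]
      rcases Nat.eq_zero_or_pos M with rfl | hM
      · rw [hA0]; push_cast; simp
      · have : (0 : ℝ) < M := by exact_mod_cast hM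
        push_cast
        field_simp
        ring
  have hAM : Filter.Tendsto (fun m : ℕ => A m / m) Filter.atTop (nhds C1) :=
    h1.comp tendsto_natCast_atTop_atTop
  have hH : ∀ M : ℕ, ∑ m ∈ Finset.range M, (1 / ((m : ℝ) + 1)) = (harmonic M : ℝ) := by
    intro M
    simp [harmonic]
  have hlog : Filter.Tendsto (fun M : ℕ => Real.log M) Filter.atTop Filter.atTop :=
    Real.tendsto_log_atTop.comp tendsto_natCast_atTop_atTop
  have hHl : ∀ M : ℕ, 1 ≤ M → Real.log M ≤ harmonic M := by
    intro M hM
    refine le_trans (Real.log_le_log (by exact_mod_cast hM) ?_) (log_add_one_le_harmonic M)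
    push_cast; linarith
  have hHt : Filter.Tendsto (fun M : ℕ => (harmonic M : ℝ)) Filter.atTop Filter.atTop := by
    refine Filter.tendsto_atTop_mono' _ ?_ hlog
    filter_upwards [Filter.eventually_ge_atTop 1] with M hM using hHl M hM
  have hlo : (fun m : ℕ => (A m / m - C1) * (1 / ((m : ℝ) + 1))) =o[Filter.atTop]
      (fun m : ℕ => 1 / ((m : ℝ) + 1)) := by
    have : (fun m : ℕ => A m / m - C1) =o[Filter.atTop] (fun _ : ℕ => (1 : ℝ)) := by
      rw [Asymptotics.isLittleO_one_iff]
      simpa using hAM.sub_const C1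
    simpa using this.mul_isBigO (Asymptotics.isBigO_refl (fun m : ℕ => 1 / ((m : ℝ) + 1)) _)
  have hso := hlo.sum_range (fun m => by positivity) (by simpa only [hH] using hHt)
  simp only [hH, sub_mul, Finset.sum_sub_distrib, ← Finset.mul_sum] at hso
  -- S M - C1 H = o(log)
  have hHlog : (fun M : ℕ => (harmonic M : ℝ) - Real.log M) =O[Filter.atTop] (fun _ : ℕ => (1 : ℝ)) := by
    refine Asymptotics.IsBigO.of_bound 1 ?_
    filter_upwards [Filter.eventually_ge_atTop 1] with M hM
    have a1 := hHl M hM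
    have a2 := harmonic_le_one_add_log M
    rw [Real.norm_eq_abs, abs_of_nonneg (by linarith)]
    simp; linarith
  have h1log : (fun _ : ℕ => (1 : ℝ)) =o[Filter.atTop] (fun M : ℕ => Real.log M) := by
    rw [Asymptotics.isLittleO_one_left_iff]
    exact tendsto_norm_atTop_atTop.comp hlog
  have hHo := hHlog.trans_isLittleO h1log
  have hHO : (fun M : ℕ => (harmonic M : ℝ)) =O[Filter.atTop] (fun M : ℕ => Real.log M) := by
    simpa using hHo.isBigO.add (Asymptotics.isBigO_refl (fun M : ℕ => Real.log M) _)
  have hso2 := hso.trans_isBigO hHO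
  have hAO : (fun m : ℕ => A m / m) =o[Filter.atTop] (fun M : ℕ => Real.log M) :=
    (hAM.isBigO_one ℝ).trans_isLittleO h1log
  have hSo : (fun M : ℕ => S M - C0 * Real.log M) =o[Filter.atTop] (fun M : ℕ => Real.log M) := by
    refine Asymptotics.IsBigO.trans_isLittleO ?_ h1log
    refine Asymptotics.IsBigO.of_bound C' ?_
    filter_upwards [Filter.eventually_ge_atTop 1] with M hM
    rw [norm_one, mul_one]
    exact h0 M (by exact_mod_cast hM)
  have hfinal : (fun M : ℕ => (C1 - C0) * Real.log M) =o[Filter.atTop] (fun M : ℕ => Real.log M) := by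
    refine (((hSo.sub hAO).sub hso2).sub (hHo.const_mul_left C1)).congr_left fun M => ?_
    rw [hid M]; ring
  have h3 := hfinal.tendsto_div_nhds_zero
  have h4 : Filter.Tendsto (fun M : ℕ => (C1 - C0) * Real.log M / Real.log M) Filter.atTop
      (nhds (C1 - C0)) := by
    refine tendsto_const_nhds.congr' ?_
    filter_upwards [hlog.eventually_gt_atTop 0] with M hM
    field_simp
  have := tendsto_nhds_unique h3 h4
  linarith
end

section
variable (K : Type*) [Field K] [NumberField K]

lemma auxZeta (s : ℝ) : dedekindZeta K (s : ℂ) =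
    ((∑' I : {I : Ideal (𝓞 K) // I ≠ ⊥}, ((Ideal.absNorm I.1 : ℝ) ^ s)⁻¹ : ℝ) : ℂ) := by
  have h1 : ∑' I : {I : Ideal (𝓞 K) // I ≠ ⊥}, ((Ideal.absNorm I.1 : ℝ) ^ s)⁻¹ =
      ∑' n : ℕ, (if n = 0 then 0 else (Nat.card {I : Ideal (𝓞 K) // Ideal.absNorm I = n} : ℝ) *
        ((n : ℝ) ^ s)⁻¹) := by
    have e1 : ∀ I : {I : Ideal (𝓞 K) // I ≠ ⊥}, ((Ideal.absNorm I.1 : ℝ) ^ s)⁻¹ =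
      (ENNReal.ofReal (((Ideal.absNorm I.1 : ℝ) ^ s)⁻¹)).toReal := fun I =>
        (ENNReal.toReal_ofReal (by positivity)).symm
    have e2 : ∀ n : ℕ, (if n = 0 then 0 else
        (Nat.card {I : Ideal (𝓞 K) // Ideal.absNorm I = n} : ℝ) * ((n : ℝ) ^ s)⁻¹) =
      (ENNReal.ofReal (if n = 0 then 0 else
        (Nat.card {I : Ideal (𝓞 K) // Ideal.absNorm I = n} : ℝ) * ((n : ℝ) ^ s)⁻¹)).toReal := fun n =>
        (ENNReal.toReal_ofReal (by split_ifs <;> positivity)).symm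
    rw [tsum_congr e1, tsum_congr e2, ← ENNReal.tsum_toReal_eq (fun _ => ENNReal.ofReal_ne_top),
      ← ENNReal.tsum_toReal_eq (fun _ => ENNReal.ofReal_ne_top),
      ← ENNReal.tsum_fiberwise _ (fun I : {I : Ideal (𝓞 K) // I ≠ ⊥} => Ideal.absNorm I.1)]
    congr 1
    refine tsum_congr fun n => ?_
    have e3 : ∀ b : ((fun I : {I : Ideal (𝓞 K) // I ≠ ⊥} => Ideal.absNorm I.1) ⁻¹' {n}),
      ENNReal.ofReal (((Ideal.absNorm b.1.1 : ℝ) ^ s)⁻¹) = ENNReal.ofReal (((n : ℝ) ^ s)⁻¹) := by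
      rintro ⟨I, hI⟩
      simp only [Set.mem_preimage, Set.mem_singleton_iff] at hI
      simp only [hI]
    rw [tsum_congr e3, ENNReal.tsum_const]
    split_ifs with hn
    · subst hn
      have : IsEmpty ((fun I : {I : Ideal (𝓞 K) // I ≠ ⊥} => Ideal.absNorm I.1) ⁻¹' {0}) := by
        constructor
        rintro ⟨I, hI⟩
        simp only [Set.mem_preimage, Set.mem_singleton_iff, Ideal.absNorm_eq_zero_iff] at hI
        exact I.2 hI
      rw [ENat.card_eq_zero_iff_empty _ |>.mpr this]
      simp
    · have hc : Nat.card {I : Ideal (𝓞 K) // Ideal.absNorm I = n} =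
        Nat.card ((fun I : {I : Ideal (𝓞 K) // I ≠ ⊥} => Ideal.absNorm I.1) ⁻¹' {n}) := by
        refine Nat.card_congr ⟨fun I => ⟨⟨I.1, ?_⟩, I.2⟩, fun I => ⟨I.1.1, I.2⟩, fun _ => rfl, fun _ => rfl⟩
        intro h
        apply hn
        rw [← I.2, h, Ideal.absNorm_bot]
      have hf : Finite ((fun I : {I : Ideal (𝓞 K) // I ≠ ⊥} => Ideal.absNorm I.1) ⁻¹' {n}) := by
        refine Set.Finite.to_subtype ?_
        refine Set.Finite.subset ((Ideal.finite_setOfPred_absNorm_le (S := 𝓞 K) n).preimage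
          Subtype.val_injective.injOn) ?_
        rintro I hI
        simp only [Set.mem_preimage, Set.mem_singleton_iff] at hI
        exact hI.le
      rw [hc, ENNReal.ofReal_mul (by positivity), ENNReal.ofReal_natCast, ENat.card_eq_coe_natCard]
      rfl
  rw [h1, Complex.ofReal_tsum, dedekindZeta, LSeries]
  refine tsum_congr fun n => ?_
  rw [LSeries.term_def]
  split_ifs with hn
  · simp
  · push_cast
    rw [Complex.ofReal_cpow (by positivity), div_eq_mul_inv]
    push_cast
    rfl

lemma auxResidue : Filter.Tendsto
        (fun s : ℝ => (s - 1) *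
          ∑' I : {I : Ideal (𝓞 K) // I ≠ ⊥}, ((Ideal.absNorm I.1 : ℝ) ^ s)⁻¹)
        (nhdsWithin 1 (Set.Ioi 1)) (nhds (dedekindZeta_residue K)) := by
  have := tendsto_sub_one_mul_dedekindZeta_nhdsGT K
  simp only [auxZeta] at this
  rw [← Filter.tendsto_ofReal_iff]
  refine this.congr fun s => ?_
  push_cast
  rfl

open Classical in
lemma auxCount (x : ℝ) : (Nat.card {I : nonZeroDivisors (Ideal (𝓞 K)) //
      (Ideal.absNorm (I : Ideal (𝓞 K)) : ℝ) ≤ x ∧ ClassGroup.mk0 I = 1} : ℝ) =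
    ∑' I : {I : Ideal (𝓞 K) // I ≠ ⊥ ∧ I.IsPrincipal},
      (if (Ideal.absNorm I.1 : ℝ) ≤ x then (1 : ℝ) else 0) := by
  have hf : Set.Finite {I : {I : Ideal (𝓞 K) // I ≠ ⊥ ∧ I.IsPrincipal} | (Ideal.absNorm I.1 : ℝ) ≤ x} := by
    refine Set.Finite.subset ((Ideal.finite_setOfPred_absNorm_le (S := 𝓞 K) ⌊x⌋₊).preimage
          Subtype.val_injective.injOn) ?_
    intro I hI
    exact Nat.le_floor hI
  have e : Nat.card {I : nonZeroDivisors (Ideal (𝓞 K)) //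
      (Ideal.absNorm (I : Ideal (𝓞 K)) : ℝ) ≤ x ∧ ClassGroup.mk0 I = 1} =
    Nat.card {I : {I : Ideal (𝓞 K) // I ≠ ⊥ ∧ I.IsPrincipal} // (Ideal.absNorm I.1 : ℝ) ≤ x} := by
    refine Nat.card_congr ⟨fun I => ⟨⟨I.1.1, nonZeroDivisors.ne_zero I.1.2, ?_⟩, I.2.1⟩,
      fun I => ⟨⟨I.1.1, mem_nonZeroDivisors_of_ne_zero I.1.2.1⟩, I.2, ?_⟩, fun _ => rfl, fun _ => rfl⟩
    · exact (ClassGroup.mk0_eq_one_iff I.1.2).mp I.2.2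
    · exact (ClassGroup.mk0_eq_one_iff _).mpr I.1.2.2
  rw [e, tsum_eq_sum (s := hf.toFinset)]
  · rw [Finset.sum_congr rfl (g := fun _ => (1 : ℝ))]
    · simp only [Finset.sum_const, nsmul_eq_mul, mul_one]
      rw [← Set.ncard_eq_toFinset_card _ hf]
      rfl
    · intro I hI
      rw [if_pos]
      simpa using hI
  · intro I hI
    rw [if_neg]
    simpa using hI
end

section
variable (K : Type*) [Field K] [NumberField K]

lemma auxDyadic : ∃ V D : ℝ, ∀ k : ℕ,
    |∑' I : {I : Ideal (𝓞 K) // I ≠ ⊥ ∧ I.IsPrincipal},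
      auxRho (Real.log (Ideal.absNorm I.1) / (Module.finrank ℚ K * Real.log 2) - k) *
        (Ideal.absNorm I.1 : ℝ)⁻¹ - V| ≤ D / 2 ^ k := by
  obtain ⟨V, D, h⟩ := auxPhi_lat K
  have hw : (0 : ℝ) < torsionOrder K := by exact_mod_cast torsionOrder_pos K
  have hn : (0 : ℝ) < Module.finrank ℚ K := Nat.cast_pos.mpr Module.finrank_pos
  have hl2 : 0 < Real.log 2 := Real.log_pos one_lt_two
  refine ⟨V / torsionOrder K, D / torsionOrder K, fun k => ?_⟩
  obtain ⟨hf, hb⟩ := h k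
  rw [aux_ideal_sum K _ (by positivity) hf, tsum_mul_left, mul_left_comm, ← tsum_mul_left] at hb
  have e : ∀ I : {I : Ideal (𝓞 K) // I ≠ ⊥ ∧ I.IsPrincipal},
    ((2 : ℝ) ^ (Module.finrank ℚ K * k))⁻¹ *
      auxg K (Real.log (Ideal.absNorm I.1) / Module.finrank ℚ K + Real.log ((2 : ℝ) ^ k)⁻¹) =
    auxRho (Real.log (Ideal.absNorm I.1) / (Module.finrank ℚ K * Real.log 2) - k) *
        (Ideal.absNorm I.1 : ℝ)⁻¹ := by
    intro I
    have hN : (0 : ℝ) < Ideal.absNorm I.1 := by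
      rw [Nat.cast_pos, Nat.pos_iff_ne_zero, Ne, Ideal.absNorm_eq_zero_iff]
      exact I.2.1
    rw [auxg, Real.log_inv, Real.log_pow]
    have e1 : (Real.log (Ideal.absNorm I.1) / Module.finrank ℚ K + -(k * Real.log 2)) / Real.log 2 =
      Real.log (Ideal.absNorm I.1) / (Module.finrank ℚ K * Real.log 2) - k := by
      field_simp
      ring
    have e2 : -(Module.finrank ℚ K * (Real.log (Ideal.absNorm I.1) / Module.finrank ℚ K +
      -(k * Real.log 2))) = -Real.log (Ideal.absNorm I.1) + (Module.finrank ℚ K * k : ℕ) * Real.log 2 := by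
      push_cast
      field_simp
      ring
    rw [e1, e2, Real.exp_add, Real.exp_neg, Real.exp_log hN, Real.exp_nat_mul, Real.exp_log two_pos]
    field_simp
  rw [tsum_congr e] at hb
  rw [show D / torsionOrder K / 2 ^ k = (D / 2 ^ k) / torsionOrder K by ring, le_div_iff₀ hw,
    ← abs_of_pos hw, ← abs_mul, abs_of_pos hw]
  rw [sub_mul, div_mul_cancel₀ _ hw.ne', mul_comm (tsum _)]
  exact hb
end

end

open Classical in
/-- Let `K` be a number field. There exist constants `C > 0` and `C′ > 0`,
where `C` equals the residue at `s = 1` of the Dedekind zeta function of `K` divided by the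
class number `h_K` (the residue being expressed as the limit of `(s−1)·∑_{I ≠ 0} N(I)^{−s}`
as `s → 1⁺`), such that for every real `x ≥ 2`,
`|∑_{I nonzero principal ideal of O_K, N(I) ≤ x} 1/N(I) − C·log x| ≤ C′`. -/
theorem stmt_8 (K : Type*) [Field K] [NumberField K] :
    ∃ C > (0 : ℝ), ∃ C' > (0 : ℝ),
      Filter.Tendsto
        (fun s : ℝ => (s - 1) *
          ∑' I : {I : Ideal (𝓞 K) // I ≠ ⊥}, ((Ideal.absNorm I.1 : ℝ) ^ s)⁻¹)
        (nhdsWithin 1 (Set.Ioi 1)) (nhds (C * (classNumber K : ℝ))) ∧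
      ∀ x : ℝ, 2 ≤ x →
        |(∑ᶠ I : Ideal (𝓞 K),
            if I ≠ ⊥ ∧ I.IsPrincipal ∧ (Ideal.absNorm I : ℝ) ≤ x
            then ((Ideal.absNorm I : ℝ))⁻¹ else 0) - C * Real.log x| ≤ C' := by
  have hres := auxResidue K
  have hh : (0 : ℝ) < classNumber K := by exact_mod_cast classNumber_pos K
  have hN : ∀ I : {I : Ideal (𝓞 K) // I ≠ ⊥ ∧ I.IsPrincipal}, 1 ≤ Ideal.absNorm I.1 := by
    intro I
    rw [Nat.one_le_iff_ne_zero, Ne, Ideal.absNorm_eq_zero_iff]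
    exact I.2.1
  have hfin : ∀ m : ℕ, {I : {I : Ideal (𝓞 K) // I ≠ ⊥ ∧ I.IsPrincipal} |
      Ideal.absNorm I.1 ≤ m}.Finite := fun m =>
    (Ideal.finite_setOfPred_absNorm_le (S := 𝓞 K) m).preimage Subtype.val_injective.injOn
  have hn : (0 : ℝ) < Module.finrank ℚ K := Nat.cast_pos.mpr Module.finrank_pos
  have hl2 : 0 < Real.log 2 := Real.log_pos one_lt_two
  obtain ⟨V, D, hVD⟩ := auxDyadic K
  obtain ⟨C', hC'⟩ := auxGenBound (fun I : {I : Ideal (𝓞 K) // I ≠ ⊥ ∧ I.IsPrincipal} =>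
    Ideal.absNorm I.1) hN hfin _ (mul_pos hn hl2) V D hVD
  have hcount := NumberField.Ideal.tendsto_norm_le_and_mk_eq_div_atTop K 1
  simp only [auxCount] at hcount
  have hC := auxGenConst (fun I : {I : Ideal (𝓞 K) // I ≠ ⊥ ∧ I.IsPrincipal} =>
    Ideal.absNorm I.1) hN hfin _ _ C' hC' hcount
  rw [hC] at hC'
  have hr : dedekindZeta_residue K / classNumber K = 2 ^ InfinitePlace.nrRealPlaces K *
      (2 * Real.pi) ^ InfinitePlace.nrComplexPlaces K * Units.regulator K /
        (Units.torsionOrder K * √|(discr K : ℝ)|) := by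
    rw [dedekindZeta_residue_def]
    field_simp
  rw [← hr] at hC'
  refine ⟨dedekindZeta_residue K / classNumber K, div_pos (dedekindZeta_residue_pos K) hh,
    |C'| + 1, by positivity, ?_, fun x hx => ?_⟩
  · rw [div_mul_cancel₀ _ hh.ne']
    exact hres
  · refine le_trans ?_ ((hC' x (by linarith)).trans ((le_abs_self C').trans (by linarith)))
    apply le_of_eq
    congr 2
    have hsupp : Function.HasFiniteSupport (fun I : Ideal (𝓞 K) =>
        if I ≠ ⊥ ∧ I.IsPrincipal ∧ (Ideal.absNorm I : ℝ) ≤ x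
            then ((Ideal.absNorm I : ℝ))⁻¹ else 0) := by
      refine (Ideal.finite_setOfPred_absNorm_le (S := 𝓞 K) ⌊x⌋₊).subset fun I hI => ?_
      have : I ≠ ⊥ ∧ I.IsPrincipal ∧ (Ideal.absNorm I : ℝ) ≤ x := by
        by_contra hcon
        exact hI (if_neg hcon)
      exact Nat.le_floor this.2.2
    rw [← tsum_eq_finsum (L := SummationFilter.unconditional _) hsupp]
    have hs := tsum_subtype {I : Ideal (𝓞 K) | I ≠ ⊥ ∧ I.IsPrincipal} (fun I : Ideal (𝓞 K) =>
      if (Ideal.absNorm I : ℝ) ≤ x then ((Ideal.absNorm I : ℝ))⁻¹ else 0)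
    refine Eq.trans ?_ hs.symm
    refine tsum_congr fun I => ?_
    rw [Set.indicator_apply]
    simp only [Set.mem_setOf_eq, ← and_assoc, ite_and]
end

section
/- Let a₀, a₁, a₂ be integers, α = a₀ + a₁r + a₂r² ∈ ℤ[r], and suppose gcd(N(α), B₁₃·Disc(f)) = 1, where N(α) = |det M| and B₁₃, B₂₃ are the indicated cofactors of M evaluated at (a₀, a₁, a₂). Then there exists an integer k with 0 ≤ k < N(α) such that for every integer n, α divides n − r in ℤ[r] if and only if n ≡ k (mod N(α)); moreover B₁₃·k ≡ B₂₃ (mod N(α)). -/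
open Polynomial

/-- The subring `ℤ[r]` of `K` generated by `r`. -/
noncomputable def Zr {K : Type*} [Field K] (r : K) : Subalgebra ℤ K := Algebra.adjoin ℤ {r}

/-- `r` as an element of `ℤ[r]`. -/
noncomputable def rZ {K : Type*} [Field K] (r : K) : Zr r := ⟨r, Algebra.subset_adjoin rfl⟩

/-- The discriminant of the cubic `X³ + c₂X² + c₁X + c₀`. -/
def discF (c₀ c₁ c₂ : ℤ) : ℤ :=
  18 * c₂ * c₁ * c₀ - 4 * c₂ ^ 3 * c₀ + c₂ ^ 2 * c₁ ^ 2 - 4 * c₁ ^ 3 - 27 * c₀ ^ 2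

/-- The matrix of multiplication by `α = a₀ + a₁r + a₂r²` on `ℚ(r)` in the basis `(1, r, r²)`,
where `r³ + c₂r² + c₁r + c₀ = 0`; its determinant is `N_{K/ℚ}(α)`. -/
def Mmat {R : Type*} [CommRing R] (c₀ c₁ c₂ a₀ a₁ a₂ : R) : Matrix (Fin 3) (Fin 3) R :=
  !![a₀, -c₀ * a₂, a₂ * c₀ * c₂ - a₁ * c₀;
     a₁, a₀ - c₁ * a₂, a₂ * c₁ * c₂ - a₂ * c₀ - a₁ * c₁;
     a₂, a₁ - c₂ * a₂, a₂ * c₂ ^ 2 - a₂ * c₁ - a₁ * c₂ + a₀]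

/-- The `(i+1, j+1)` cofactor of a 3×3 matrix (`cof M i j` with 0-based `i, j` is the
cofactor `B_{(i+1)(j+1)}` in 1-based notation). -/
def cof {R : Type*} [CommRing R] (M : Matrix (Fin 3) (Fin 3) R) (i j : Fin 3) : R :=
  (-1 : R) ^ ((i : ℕ) + (j : ℕ)) * (M.submatrix i.succAbove j.succAbove).det

theorem linind_aux (c₀ c₁ c₂ : ℤ)
    (hf : Irreducible (X ^ 3 + C c₂ * X ^ 2 + C c₁ * X + C c₀ : ℤ[X]))
    {K : Type*} [Field K] [NumberField K] (r : K)
    (hr : aeval r (X ^ 3 + C c₂ * X ^ 2 + C c₁ * X + C c₀ : ℤ[X]) = 0)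
    (x y z : ℤ) (h : (x : K) + y * r + z * r ^ 2 = 0) : x = 0 ∧ y = 0 ∧ z = 0 := by
  have hmon : (X ^ 3 + C c₂ * X ^ 2 + C c₁ * X + C c₀ : ℤ[X]).Monic := by monicity!
  have hdeg : (X ^ 3 + C c₂ * X ^ 2 + C c₁ * X + C c₀ : ℤ[X]).natDegree = 3 := by compute_degree!
  have hint : IsIntegral ℤ r := ⟨_, hmon, by rwa [← aeval_def]⟩
  have h1 := minpoly.isIntegrallyClosed_dvd hint hr
  have hnu : ¬ IsUnit (minpoly ℤ r) := minpoly.not_isUnit ℤ r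
  have h2 : (X ^ 3 + C c₂ * X ^ 2 + C c₁ * X + C c₀ : ℤ[X]) ∣ minpoly ℤ r :=
    (hf.dvd_iff.1 h1).resolve_left hnu |>.dvd
  have h3 : aeval r (C x + C y * X + C z * X ^ 2 : ℤ[X]) = 0 := by simpa using h
  have h4 := h2.trans (minpoly.isIntegrallyClosed_dvd hint h3)
  have h5 : (C x + C y * X + C z * X ^ 2 : ℤ[X]) = 0 := by
    by_contra hne
    have := natDegree_le_of_dvd h4 hne
    have h6 : (C x + C y * X + C z * X ^ 2 : ℤ[X]).natDegree ≤ 2 := by compute_degree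
    omega
  refine ⟨?_, ?_, ?_⟩
  · simpa [coeff_X, coeff_C] using congrArg (fun p => coeff p 0) h5
  · have := congrArg (fun p => coeff p 1) h5
    simpa [-eq_intCast, -map_intCast, coeff_X, coeff_C, coeff_X_pow] using this
  · have := congrArg (fun p => coeff p 2) h5
    simpa [-eq_intCast, -map_intCast, coeff_X, coeff_C, coeff_X_pow] using this

theorem repr_aux (c₀ c₁ c₂ : ℤ) {K : Type*} [Field K] (r : K)
    (hr : r ^ 3 + c₂ * r ^ 2 + c₁ * r + c₀ = 0) (t : K) (ht : t ∈ Zr r) :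
    ∃ x y z : ℤ, t = (x : K) + y * r + z * r ^ 2 := by
  unfold Zr at ht
  induction ht using Algebra.adjoin_induction with
  | mem x hx => exact ⟨0, 1, 0, by simp at hx; simp [hx]⟩
  | algebraMap n => exact ⟨n, 0, 0, by simp⟩
  | add a b _ _ ha hb =>
    obtain ⟨x, y, z, rfl⟩ := ha
    obtain ⟨x', y', z', rfl⟩ := hb
    exact ⟨x + x', y + y', z + z', by push_cast; ring⟩
  | mul a b _ _ ha hb =>
    obtain ⟨x, y, z, rfl⟩ := ha
    obtain ⟨u, v, w, rfl⟩ := hb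
    refine ⟨x*u - c₀*(y*w+z*v) + c₀*c₂*(z*w), x*v+y*u - c₁*(y*w+z*v) + (c₁*c₂-c₀)*(z*w),
      x*w+y*v+z*u - c₂*(y*w+z*v) + (c₂^2-c₁)*(z*w), ?_⟩
    push_cast
    linear_combination ((y*w+z*v : K) + z*w*(r - c₂)) * hr

/-- Let `α = a₀ + a₁r + a₂r² ∈ ℤ[r]` with
`gcd(N(α), B₁₃·Disc(f)) = 1`, where `N(α) = |det M|`. Then there is an integer `k` with
`0 ≤ k < N(α)` such that for every integer `n`, `α ∣ n − r` in `ℤ[r]` iff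
`n ≡ k (mod N(α))`; moreover `B₁₃·k ≡ B₂₃ (mod N(α))`. -/
theorem stmt_9 (c₀ c₁ c₂ : ℤ)
    (hf : Irreducible (X ^ 3 + C c₂ * X ^ 2 + C c₁ * X + C c₀ : ℤ[X]))
    (K : Type*) [Field K] [NumberField K] (r : K)
    (hr : aeval r (X ^ 3 + C c₂ * X ^ 2 + C c₁ * X + C c₀ : ℤ[X]) = 0)
    (hgen : Algebra.adjoin ℚ {r} = ⊤)
    (a₀ a₁ a₂ : ℤ)
    (hgcd : Int.gcd (Mmat c₀ c₁ c₂ a₀ a₁ a₂).det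
      (cof (Mmat c₀ c₁ c₂ a₀ a₁ a₂) 0 2 * discF c₀ c₁ c₂) = 1) :
    ∃ k : ℤ, 0 ≤ k ∧ k < ((Mmat c₀ c₁ c₂ a₀ a₁ a₂).det.natAbs : ℤ) ∧
      (∀ n : ℤ,
        ((a₀ : Zr r) + (a₁ : Zr r) * rZ r + (a₂ : Zr r) * rZ r ^ 2 ∣ (n : Zr r) - rZ r) ↔
          n ≡ k [ZMOD ((Mmat c₀ c₁ c₂ a₀ a₁ a₂).det.natAbs : ℤ)]) ∧
      cof (Mmat c₀ c₁ c₂ a₀ a₁ a₂) 0 2 * k ≡ cof (Mmat c₀ c₁ c₂ a₀ a₁ a₂) 1 2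
        [ZMOD ((Mmat c₀ c₁ c₂ a₀ a₁ a₂).det.natAbs : ℤ)] := by
  have hr' : r ^ 3 + c₂ * r ^ 2 + c₁ * r + c₀ = 0 := by simpa using hr
  have hli := linind_aux c₀ c₁ c₂ hf r hr
  obtain ⟨p, hp⟩ : ∃ p, p = cof (Mmat c₀ c₁ c₂ a₀ a₁ a₂) 0 0 := ⟨_, rfl⟩
  obtain ⟨q, hq⟩ : ∃ p, p = cof (Mmat c₀ c₁ c₂ a₀ a₁ a₂) 0 1 := ⟨_, rfl⟩
  obtain ⟨s, hs⟩ : ∃ p, p = cof (Mmat c₀ c₁ c₂ a₀ a₁ a₂) 0 2 := ⟨_, rfl⟩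
  obtain ⟨t, ht⟩ : ∃ p, p = cof (Mmat c₀ c₁ c₂ a₀ a₁ a₂) 1 2 := ⟨_, rfl⟩
  obtain ⟨D, hD⟩ : ∃ D, D = (Mmat c₀ c₁ c₂ a₀ a₁ a₂).det := ⟨_, rfl⟩
  rw [← hs, ← hD] at hgcd
  rw [← hs, ← ht, ← hD]
  simp [cof, Mmat, Matrix.det_fin_two, Matrix.det_fin_three, Fin.succAbove] at hp hq hs ht hD
  have htq : t = q - c₂ * s := by rw [ht, hq, hs]; ring
  have r0 : a₀ * p - c₀ * (a₁ * s + a₂ * q) + c₀ * c₂ * (a₂ * s) = D := by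
    rw [hp, hq, hs, hD]; ring
  have r1 : a₀ * q + a₁ * p - c₁ * (a₁ * s + a₂ * q) + (c₁ * c₂ - c₀) * (a₂ * s) = 0 := by
    rw [hp, hq, hs]; ring
  have r2 : a₀ * s + a₁ * q + a₂ * p - c₂ * (a₁ * s + a₂ * q) + (c₂ ^ 2 - c₁) * (a₂ * s) = 0 := by
    rw [hp, hq, hs]; ring
  have m1 : p * t + c₀ * s ^ 2 = - D * (a₁ - c₂ * a₂) := by
    rw [hp, hs, hD, ht]; ring
  have m2 : q * t - s * (p - c₁ * s) = D * a₂ := by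
    rw [hp, hq, hs, hD, ht]; ring
  clear hp hq ht hD
  have hab : ((a₀ : K) + a₁ * r + a₂ * r ^ 2) * (p + q * r + s * r ^ 2) = D := by
    have k0 := congrArg (Int.cast : ℤ → K) r0
    have k1 := congrArg (Int.cast : ℤ → K) r1
    have k2 := congrArg (Int.cast : ℤ → K) r2
    push_cast at k0 k1 k2
    linear_combination (a₂ * s * r + a₁ * s + a₂ * q - c₂ * a₂ * s : K) * hr' + k0 + r * k1 + r ^ 2 * k2
  have hD0 : D ≠ 0 := by
    intro h0
    have hs0 : s ≠ 0 := by
      intro hs0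
      rw [h0, hs0] at hgcd
      simp at hgcd
    rw [h0, Int.cast_zero] at hab
    rcases mul_eq_zero.1 hab with h | h
    · obtain ⟨h1, h2, h3⟩ := hli a₀ a₁ a₂ h
      apply hs0
      rw [hs, h1, h2, h3]; simp
    · exact hs0 (hli p q s h).2.2
  have hb0 : (p + q * r + s * r ^ 2 : K) ≠ 0 := by
    intro h
    rw [h, mul_zero] at hab
    exact hD0 (by exact_mod_cast hab.symm)
  have hcop : IsCoprime D s := (Int.isCoprime_iff_gcd_eq_one.2 hgcd).of_mul_right_left
  have key : ∀ n : ℤ, ((a₀ : Zr r) + (a₁ : Zr r) * rZ r + (a₂ : Zr r) * rZ r ^ 2 ∣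
      (n : Zr r) - rZ r) ↔ D ∣ n * s - t := by
    intro n
    have e : ((n : K) - r) * (p + q * r + s * r ^ 2) =
        ((n * p + c₀ * s : ℤ) : K) + ((n * q - p + c₁ * s : ℤ) : K) * r
          + ((n * s - t : ℤ) : K) * r ^ 2 := by
      rw [htq]; push_cast
      linear_combination (-s : K) * hr'
    constructor
    · rintro ⟨d, hd⟩
      obtain ⟨x, y, z, hxyz⟩ := repr_aux c₀ c₁ c₂ r hr' d d.2
      have hd' := congrArg (Subtype.val : Zr r → K) hd
      simp [rZ] at hd'
      rw [hxyz] at hd'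
      have h3 := (hli (n * p + c₀ * s - D * x) (n * q - p + c₁ * s - D * y) (n * s - t - D * z) (by
        push_cast at e ⊢
        linear_combination (p + q * r + s * r ^ 2 : K) * hd' - e +
          (x + y * r + z * r ^ 2 : K) * hab)).2.2
      exact ⟨z, by linarith⟩
    · rintro ⟨z, hz⟩
      obtain ⟨x, hx⟩ : D ∣ n * p + c₀ * s := by
        apply hcop.dvd_of_dvd_mul_left
        exact ⟨p * z - (a₁ - c₂ * a₂), by linear_combination p * hz + m1⟩
      obtain ⟨y, hy⟩ : D ∣ n * q - p + c₁ * s := by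
        apply hcop.dvd_of_dvd_mul_left
        exact ⟨q * z + a₂, by linear_combination q * hz + m2⟩
      refine ⟨(x : Zr r) + (y : Zr r) * rZ r + (z : Zr r) * rZ r ^ 2, ?_⟩
      apply Subtype.ext
      simp [rZ]
      apply mul_right_cancel₀ hb0
      rw [e, hx, hy, hz]
      push_cast
      linear_combination -(x + y * r + z * r ^ 2 : K) * hab
  obtain ⟨v, u, huv⟩ := hcop
  have hk : D ∣ s * ((u * t) % (D.natAbs : ℤ)) - t := by
    have h1 : D ∣ (u * t) % (D.natAbs : ℤ) - u * t := by
      rw [← Int.natAbs_dvd]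
      exact (Int.mod_modEq (u * t) (D.natAbs : ℤ)).symm.dvd
    obtain ⟨w, hw⟩ := h1
    exact ⟨s * w - v * t, by linear_combination s * hw + t * huv⟩
  refine ⟨(u * t) % (D.natAbs : ℤ), Int.emod_nonneg _ (by simpa using hD0),
    Int.emod_lt_of_pos _ (by simpa using hD0), ?_, ?_⟩
  · intro n
    rw [key n, Int.modEq_comm, Int.modEq_iff_dvd, Int.natAbs_dvd]
    generalize (u * t) % (D.natAbs : ℤ) = k at hk
    obtain ⟨w, hw⟩ := hk
    constructor
    · rintro ⟨z, hz⟩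
      exact ⟨v * (n - k) + u * (z - w), by linear_combination -(n-k) * huv + u * hz - u * hw⟩
    · rintro ⟨z, hz⟩
      exact ⟨s * z + w, by linear_combination s * hz + hw⟩
  · rw [Int.modEq_comm, Int.modEq_iff_dvd, Int.natAbs_dvd]
    exact hk
end

section
/- For all integers a₀, a₁, a₂ and α = a₀ + a₁r + a₂r² ∈ ℤ[r], and for each i ∈ {1, 2, 3}, the element B_{1i}·r − B_{2i} of ℤ[r] is divisible by α in ℤ[r]; that is, B_{1i}·r ≡ B_{2i} (mod (α)). -/
open Polynomial

/-- For all integers `a₀, a₁, a₂` and `α = a₀ + a₁r + a₂r² ∈ ℤ[r]`, and for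
each `i ∈ {1, 2, 3}`, the element `B_{1i}·r − B_{2i}` of `ℤ[r]` is divisible by `α` in
`ℤ[r]`, i.e. `B_{1i}·r ≡ B_{2i} (mod (α))`. -/
theorem stmt_10 (c₀ c₁ c₂ : ℤ)
    (hf : Irreducible (X ^ 3 + C c₂ * X ^ 2 + C c₁ * X + C c₀ : ℤ[X]))
    (K : Type*) [Field K] [NumberField K] (r : K)
    (hr : aeval r (X ^ 3 + C c₂ * X ^ 2 + C c₁ * X + C c₀ : ℤ[X]) = 0)
    (hgen : Algebra.adjoin ℚ {r} = ⊤)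
    (a₀ a₁ a₂ : ℤ) (j : Fin 3) :
    (a₀ : Zr r) + (a₁ : Zr r) * rZ r + (a₂ : Zr r) * rZ r ^ 2 ∣
      ((cof (Mmat c₀ c₁ c₂ a₀ a₁ a₂) 0 j : ℤ) : Zr r) * rZ r -
        ((cof (Mmat c₀ c₁ c₂ a₀ a₁ a₂) 1 j : ℤ) : Zr r) := by
  have h : rZ r ^ 3 + (c₂ : Zr r) * rZ r ^ 2 + (c₁ : Zr r) * rZ r + (c₀ : Zr r) = 0 := by
    apply Subtype.ext
    simpa [rZ] using hr
  generalize rZ r = x at h ⊢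
  have e1 : (1 : Fin 3).succAbove (0 : Fin 2) = 0 := rfl
  have e2 : (1 : Fin 3).succAbove (1 : Fin 2) = 2 := rfl
  have e3 : (2 : Fin 3).succAbove (0 : Fin 2) = 0 := rfl
  have e4 : (2 : Fin 3).succAbove (1 : Fin 2) = 1 := rfl
  have e5 : (0 : Fin 3).succAbove (0 : Fin 2) = 1 := rfl
  have e6 : (0 : Fin 3).succAbove (1 : Fin 2) = 2 := rfl
  fin_cases j
  · refine ⟨(a₂ * c₂ ^ 2 - a₂ * c₁ - a₁ * c₂ + a₀) * x - (a₁ - c₂ * a₂) * x ^ 2, ?_⟩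
    simp [cof, Mmat, Matrix.det_fin_two, e1, e2, e3, e4, e5, e6]
    linear_combination ((a₁ - c₂ * a₂) * (a₂ * x + a₁ - c₂ * a₂) - (a₂ * c₂ ^ 2 - a₂ * c₁ - a₁ * c₂ + a₀) * a₂ : Zr r) * h
  · refine ⟨a₂ * x ^ 2 - (a₂ * c₂ ^ 2 - a₂ * c₁ - a₁ * c₂ + a₀), ?_⟩
    simp [cof, Mmat, Matrix.det_fin_two, e1, e2, e3, e4, e5, e6]
    linear_combination (- a₂ * (a₂ * x + a₁ - c₂ * a₂) : Zr r) * h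
  · refine ⟨(a₁ - c₂ * a₂) - a₂ * x, ?_⟩
    simp [cof, Mmat, Matrix.det_fin_two, e1, e2, e3, e4, e5, e6]
    linear_combination (a₂ * a₂ : Zr r) * h
end

section
/- For all integers c₀, c₁, c₂, a₁, a₂, let R = Res_T(B₁₃(T), N(T)) and R₀ = Res_T(B₁₃(T), B₂₂(T)) be the resultants with respect to T = a₀ of the polynomials B₁₃ (of nominal degree 1 in a₀), det M (of nominal degree 3 in a₀) and B₂₂ (of nominal degree 2 in a₀). Then, with q₀ = a₂c₂ − a₁, the identity −q₀²·R = R₀² holds. -/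
open Polynomial in
lemma aux_coeffs (p q r s : ℤ) (P : ℤ[X]) (h : P = C p * X ^ 3 + C q * X ^ 2 + C r * X + C s) :
    P.coeff 3 = p ∧ P.coeff 2 = q ∧ P.coeff 1 = r ∧ P.coeff 0 = s := by
  subst h
  refine ⟨?_, ?_, ?_, ?_⟩ <;> simp [coeff_X, coeff_C, coeff_X_pow, -eq_intCast, -map_intCast]

open Polynomial in
/-- For all integers `c₀, c₁, c₂, a₁, a₂`, let
`R = Res_T(B₁₃(T), N(T))` and `R₀ = Res_T(B₁₃(T), B₂₂(T))` be the resultants with respect to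
`T = a₀` (given by the determinants of the Sylvester matrices for the nominal degrees
`1, 3` and `1, 2` respectively) of `B₁₃` (nominal degree 1 in `a₀`), `N = det M` (nominal
degree 3) and `B₂₂` (nominal degree 2). Then, with `q₀ = a₂c₂ − a₁`, one has `−q₀²·R = R₀²`. -/
theorem stmt_13 (c₀ c₁ c₂ a₁ a₂ : ℤ) :
    letI B13 : ℤ[X] := cof (Mmat (C c₀) (C c₁) (C c₂) X (C a₁) (C a₂)) 0 2
    letI B22 : ℤ[X] := cof (Mmat (C c₀) (C c₁) (C c₂) X (C a₁) (C a₂)) 1 1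
    letI NT : ℤ[X] := (Mmat (C c₀) (C c₁) (C c₂) X (C a₁) (C a₂)).det
    letI R : ℤ := Matrix.det
      !![B13.coeff 1, B13.coeff 0, 0, 0;
         0, B13.coeff 1, B13.coeff 0, 0;
         0, 0, B13.coeff 1, B13.coeff 0;
         NT.coeff 3, NT.coeff 2, NT.coeff 1, NT.coeff 0]
    letI R0 : ℤ := Matrix.det
      !![B13.coeff 1, B13.coeff 0, 0;
         0, B13.coeff 1, B13.coeff 0;
         B22.coeff 2, B22.coeff 1, B22.coeff 0]
    R0 ^ 2 = -(a₂ * c₂ - a₁) ^ 2 * R := by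
  set B13 : ℤ[X] := cof (Mmat (C c₀) (C c₁) (C c₂) X (C a₁) (C a₂)) 0 2 with hB13
  set B22 : ℤ[X] := cof (Mmat (C c₀) (C c₁) (C c₂) X (C a₁) (C a₂)) 1 1 with hB22
  set NT : ℤ[X] := (Mmat (C c₀) (C c₁) (C c₂) X (C a₁) (C a₂)).det with hNT
  obtain ⟨-, -, h1, h0⟩ := aux_coeffs 0 0 (-a₂) (a₁ * (a₁ - c₂ * a₂) + c₁ * a₂ ^ 2) B13 (by
    simp [hB13, cof, Mmat, Matrix.det_fin_two, Fin.succAbove]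
    ring)
  obtain ⟨-, g2, g1, g0⟩ := aux_coeffs 0 1 (a₂ * c₂ ^ 2 - a₂ * c₁ - a₁ * c₂)
      (-a₂ * (a₂ * c₀ * c₂ - a₁ * c₀)) B22 (by
    simp [hB22, cof, Mmat, Matrix.det_fin_two, Fin.succAbove]
    ring)
  obtain ⟨n3, n2, n1, n0⟩ := aux_coeffs 1 (-c₁ * a₂ + (a₂ * c₂ ^ 2 - a₂ * c₁ - a₁ * c₂))
      (-c₁ * a₂ * (a₂ * c₂ ^ 2 - a₂ * c₁ - a₁ * c₂)
        - (a₂ * c₁ * c₂ - a₂ * c₀ - a₁ * c₁) * (a₁ - c₂ * a₂)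
        + c₀ * a₂ * a₁ - (a₂ * c₀ * c₂ - a₁ * c₀) * a₂)
      (c₀ * a₂ * a₁ * (a₂ * c₂ ^ 2 - a₂ * c₁ - a₁ * c₂)
        - c₀ * a₂ * (a₂ * c₁ * c₂ - a₂ * c₀ - a₁ * c₁) * a₂
        + (a₂ * c₀ * c₂ - a₁ * c₀) * (a₁ * (a₁ - c₂ * a₂) + a₂ * (c₁ * a₂))) NT (by
    simp [hNT, Mmat, Matrix.det_fin_three]
    ring)
  have hR : Matrix.det
      !![B13.coeff 1, B13.coeff 0, 0, 0;
         0, B13.coeff 1, B13.coeff 0, 0;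
         0, 0, B13.coeff 1, B13.coeff 0;
         NT.coeff 3, NT.coeff 2, NT.coeff 1, NT.coeff 0] = -a₂ * (-a₂ * (-a₂ * NT.coeff 0 - B13.coeff 0 * NT.coeff 1)
      + B13.coeff 0 ^ 2 * NT.coeff 2) - B13.coeff 0 ^ 3 * NT.coeff 3 := by
    simp [Matrix.det_succ_row_zero, Fin.sum_univ_succ, Fin.succAbove, h1]
    ring
  have hR0 : Matrix.det
      !![B13.coeff 1, B13.coeff 0, 0;
         0, B13.coeff 1, B13.coeff 0;
         B22.coeff 2, B22.coeff 1, B22.coeff 0] = -a₂ * (-a₂ * B22.coeff 0 - B13.coeff 0 * B22.coeff 1)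
      + B13.coeff 0 ^ 2 * B22.coeff 2 := by
    simp [Matrix.det_fin_three, h1]
    ring
  rw [hR, hR0, h0, g0, g1, g2, n0, n1, n2, n3]
  ring
end

section
/- In the polynomial ring ℤ[c₀, c₁, c₂, a₀, a₁, a₂], the polynomial B₁₃ divides the polynomial q₀·(U·det M − q·B₂₃), where U = a₂², q₀ = a₂c₂ − a₁ and q = a₂³c₁c₂ − a₁a₂²c₂² − a₂³c₀ − a₁a₂²c₁ + 2a₁²a₂c₂ − a₁³. -/
open MvPolynomial in
/-- In the polynomial ring `ℤ[c₀, c₁, c₂, a₀, a₁, a₂]` (here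
`MvPolynomial (Fin 6) ℤ` with the variables `X 0, …, X 5` standing for
`c₀, c₁, c₂, a₀, a₁, a₂`), the polynomial `B₁₃` divides `q₀·(U·det M − q·B₂₃)`, where
`U = a₂²`, `q₀ = a₂c₂ − a₁` and
`q = a₂³c₁c₂ − a₁a₂²c₂² − a₂³c₀ − a₁a₂²c₁ + 2a₁²a₂c₂ − a₁³`. -/
theorem stmt_15 :
    letI c₀ : MvPolynomial (Fin 6) ℤ := X 0
    letI c₁ : MvPolynomial (Fin 6) ℤ := X 1
    letI c₂ : MvPolynomial (Fin 6) ℤ := X 2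
    letI a₀ : MvPolynomial (Fin 6) ℤ := X 3
    letI a₁ : MvPolynomial (Fin 6) ℤ := X 4
    letI a₂ : MvPolynomial (Fin 6) ℤ := X 5
    cof (Mmat c₀ c₁ c₂ a₀ a₁ a₂) 0 2 ∣
      (a₂ * c₂ - a₁) *
        (a₂ ^ 2 * (Mmat c₀ c₁ c₂ a₀ a₁ a₂).det -
          (a₂ ^ 3 * c₁ * c₂ - a₁ * a₂ ^ 2 * c₂ ^ 2 - a₂ ^ 3 * c₀ - a₁ * a₂ ^ 2 * c₁ +
              2 * a₁ ^ 2 * a₂ * c₂ - a₁ ^ 3) * cof (Mmat c₀ c₁ c₂ a₀ a₁ a₂) 1 2) := by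
  generalize (X 0 : MvPolynomial (Fin 6) ℤ) = c₀
  generalize (X 1 : MvPolynomial (Fin 6) ℤ) = c₁
  generalize (X 2 : MvPolynomial (Fin 6) ℤ) = c₂
  generalize (X 3 : MvPolynomial (Fin 6) ℤ) = a₀
  generalize (X 4 : MvPolynomial (Fin 6) ℤ) = a₁
  generalize (X 5 : MvPolynomial (Fin 6) ℤ) = a₂
  refine Dvd.intro ((a₂ * c₂ - a₁) * (a₂ ^ 2 * (a₂ * c₀ * c₂ - a₁ * c₀)
    - a₀ * a₂ * (a₂ * c₂ ^ 2 - a₂ * c₁ - a₁ * c₂ + a₀)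
    + a₁ * (a₀ * (a₂ * c₂ - a₁) - c₀ * a₂ ^ 2))) ?_
  have h1 : cof (Mmat c₀ c₁ c₂ a₀ a₁ a₂) 0 2 = a₁ * (a₁ - c₂ * a₂) - a₂ * (a₀ - c₁ * a₂) := by
    simp [cof, Mmat, Matrix.det_fin_two, Fin.succAbove]
    ring
  have h2 : cof (Mmat c₀ c₁ c₂ a₀ a₁ a₂) 1 2 = a₀ * (a₂ * c₂ - a₁) - c₀ * a₂ ^ 2 := by
    simp [cof, Mmat, Matrix.det_fin_two, Fin.succAbove]
    ring
  rw [h1, h2, Matrix.det_fin_three]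
  simp only [Mmat, Matrix.of_apply, Matrix.cons_val]
  ring
end

section
/- For every ε > 0 there is a constant C (depending only on f and ε) such that the following holds for all reals A, B, all M ≥ 1 and all X ≥ 2. For a nonzero ideal R of ℤ[r], let S(R) = #{(a, b) ∈ ℤ² : A ≤ a ≤ A + M, B ≤ b ≤ B + M, a − b·r ∈ R}. Then ∑_{R : N(R) ≤ X, ρ(R) = 1} |S(R) − M²/N(R)| ≤ C·(M + X)·X^ε, where the sum is over nonzero ideals R of ℤ[r] with N(R) ≤ X and ρ(R) = 1. -/
open Polynomial

/-- The norm `N(I)` of an ideal `I` of `ℤ[r]`, i.e. the cardinality of `ℤ[r]/I`. -/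
noncomputable def Nrm {K : Type*} [Field K] (r : K) (I : Ideal (Zr r)) : ℕ :=
  Nat.card ((Zr r) ⧸ I)

/-- `ρ(I) = #{n mod N(I) : I ∣ n − r}`. -/
noncomputable def rho {K : Type*} [Field K] (r : K) (I : Ideal (Zr r)) : ℕ :=
  Nat.card {k : ZMod (Nrm r I) // ∃ n : ℤ, (n : ZMod (Nrm r I)) = k ∧ (n : Zr r) - rZ r ∈ I}

theorem div_bound (ε : ℝ) (hε : 0 < ε) : ∃ C : ℝ, 1 ≤ C ∧ ∀ n : ℕ, n ≠ 0 →
    (n.divisors.card : ℝ) ≤ C * (n : ℝ) ^ ε := by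
  have hl2 : 0 < Real.log 2 := Real.log_pos (by norm_num)
  obtain ⟨P, hP⟩ := exists_nat_ge ((2:ℝ) ^ (1/ε))
  set B : ℝ := 1 + 1 / (ε * Real.log 2) with hB
  have hB1 : 1 ≤ B := by
    have : 0 ≤ 1 / (ε * Real.log 2) := by positivity
    linarith
  refine ⟨B ^ P, one_le_pow₀ hB1, fun n hn => ?_⟩
  have key : ∀ p ∈ n.primeFactors, ((n.factorization p + 1 : ℕ) : ℝ) ≤
      (if p < P then B else 1) * ((p ^ (n.factorization p) : ℕ) : ℝ) ^ ε := by
    intro p hp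
    have hp2 : 2 ≤ p := (Nat.prime_of_mem_primeFactors hp).two_le
    have hp2' : (2:ℝ) ≤ p := by exact_mod_cast hp2
    generalize n.factorization p = a
    have e1 : ((p ^ a : ℕ) : ℝ) ^ ε = ((p:ℝ) ^ ε) ^ a := by
      push_cast
      rw [← Real.rpow_natCast, ← Real.rpow_mul (by positivity), mul_comm, Real.rpow_mul (by positivity), Real.rpow_natCast]
    rw [e1]
    split_ifs with h
    · have h1 : ((2:ℝ) ^ ε) ^ a ≤ ((p:ℝ) ^ ε) ^ a := by gcongr
      have h2 : 1 + ε * Real.log 2 * a ≤ ((2:ℝ) ^ ε) ^ a := by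
        have : ((2:ℝ) ^ ε) ^ a = Real.exp (ε * Real.log 2 * a) := by
          rw [Real.rpow_def_of_pos (by norm_num), ← Real.exp_nat_mul]
          congr 1; ring
        rw [this]
        linarith [Real.add_one_le_exp (ε * Real.log 2 * a)]
      have h3 : ((a + 1 : ℕ) : ℝ) ≤ B * (1 + ε * Real.log 2 * a) := by
        have : B * (1 + ε * Real.log 2 * a) = 1 + a + (1 / (ε * Real.log 2) + ε * Real.log 2 * a) := by
          rw [hB]; field_simp; ring
        rw [this]; push_cast
        have : 0 ≤ 1 / (ε * Real.log 2) + ε * Real.log 2 * a := by positivity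
        linarith
      calc _ ≤ _ := h3
        _ ≤ _ := by gcongr; linarith
    · push Not at h
      have : (2:ℝ) ≤ (p:ℝ) ^ ε := by
        calc (2:ℝ) = ((2:ℝ) ^ (1/ε)) ^ ε := by
              rw [← Real.rpow_mul (by norm_num)]; field_simp; simp
          _ ≤ (p:ℝ) ^ ε := by
              gcongr
              exact hP.trans (by exact_mod_cast h)
      calc ((a + 1 : ℕ) : ℝ) ≤ (2:ℝ) ^ a := by exact_mod_cast Nat.lt_two_pow_self
        _ ≤ 1 * ((p:ℝ) ^ ε) ^ a := by rw [one_mul]; gcongr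
  rw [Nat.card_divisors hn]
  push_cast
  calc ∏ p ∈ n.primeFactors, ((n.factorization p : ℝ) + 1)
      ≤ ∏ p ∈ n.primeFactors, ((if p < P then B else 1) * ((p ^ (n.factorization p) : ℕ) : ℝ) ^ ε) := by
        apply Finset.prod_le_prod
        · intros; positivity
        · intro p hp; exact_mod_cast key p hp
    _ = (∏ p ∈ n.primeFactors, (if p < P then B else 1)) * (n:ℝ) ^ ε := by
        rw [Finset.prod_mul_distrib]
        congr 1
        rw [Real.finsetProd_rpow _ _ (by intros; positivity)]
        congr 1
        rw [← Nat.cast_prod]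
        congr 1
        exact Nat.prod_factorization_pow_eq_self hn
    _ ≤ B ^ P * (n:ℝ) ^ ε := by
        gcongr
        rw [← Finset.prod_filter, Finset.prod_const]
        apply pow_le_pow_right₀ hB1
        calc _ ≤ (Finset.range P).card := Finset.card_le_card (by
              intro x hx; simp at hx ⊢; exact hx.2)
          _ = P := by simp

theorem card_of_pairwise (N E : ℕ) (hN : 0 < N) (hE : 0 < E) (W : Finset ℕ)
    (hW : ∀ k ∈ W, k < N) (h : ∀ k ∈ W, ∀ k' ∈ W, (N:ℤ) ∣ E * ((k:ℤ) - k')) : W.card ≤ E := by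
  have : W.card ≤ (Finset.range E).card := by
    apply Finset.card_le_card_of_injOn (fun k => E * k / N)
    · intro k hk
      simp only [Finset.coe_range, Set.mem_Iio]
      rw [Nat.div_lt_iff_lt_mul hN]
      exact Nat.mul_lt_mul_of_pos_left (hW k hk) hE
    · intro k hk k' hk' hkk
      simp only at hkk
      have h1 : E * k % N = E * k' % N := by
        have := h k' hk' k hk
        apply (Nat.modEq_iff_dvd (n := N)).2
        push_cast
        rwa [← mul_sub]
      have h2 : E * k = E * k' := by
        rw [← Nat.div_add_mod (E * k) N, ← Nat.div_add_mod (E*k') N, h1, hkk]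
      exact Nat.eq_of_mul_eq_mul_left hE h2
  simpa using this

theorem three_dvd (d e e' D x : ℤ) (hd : (Int.gcd d e : ℤ) ∣ D) (h2 : (Int.gcd d e' : ℤ) ∣ D)
    (h3 : (Int.gcd e e' : ℤ) ∣ D) (xd : d ∣ x) (xe : e ∣ x) (xe' : e' ∣ x) :
    d * e * e' ∣ D ^ 3 * x := by
  have step : ∀ u v y g: ℤ, (Int.gcd u v : ℤ) ∣ g → u ∣ y → v ∣ y → u * v ∣ g * y := by
    intro u v y g hg hu hv
    have := mul_dvd_mul hg (Int.coe_lcm_dvd hu hv)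
    refine dvd_trans ?_ this
    have h := Int.gcd_mul_lcm u v
    have h' : (u * v).natAbs = (Int.gcd u v * Int.lcm u v) := by rw [h, Int.natAbs_mul]
    rw [← Int.natAbs_dvd, h']; push_cast; rfl
  have s1 : d * e ∣ D * x := step d e x D hd xd xe
  have s2 : d * e * e' ∣ D^2 * (D * x) := by
    apply step _ _ _ _ _ s1 (xe'.mul_left D)
    have : (Int.gcd (d*e) e' : ℤ) ∣ (Int.gcd d e' : ℤ) * (Int.gcd e e' : ℤ) := by
      have := Nat.gcd_mul_right_dvd_mul_gcd e'.natAbs d.natAbs e.natAbs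
      rw [Int.gcd_comm _ e', Int.gcd_comm d e', Int.gcd_comm e e']
      rw [Int.gcd_def, Int.gcd_def, Int.gcd_def, Int.natAbs_mul]
      exact_mod_cast this
    refine this.trans ?_
    rw [sq]; exact mul_dvd_mul h2 h3
  convert s2 using 1; ring

theorem cofactor (N : ℕ) (x y : ℤ) (hN : 0 < N) (h : (N:ℤ) ∣ x * y) :
    ((N / Int.gcd x N : ℕ) : ℤ) ∣ y := by
  have hg : Int.gcd x N ∣ N := by exact_mod_cast Int.gcd_dvd_right x N
  have hgpos : 0 < Int.gcd x N := Nat.pos_of_dvd_of_pos hg hN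
  obtain ⟨x', N', -⟩ : ∃ x' N' : ℤ, True := ⟨0,0,trivial⟩
  have hc : IsCoprime ((N / Int.gcd x N : ℕ) : ℤ) (x / Int.gcd x N) := by
    rw [Int.isCoprime_iff_gcd_eq_one, Int.gcd_comm]
    have := Int.gcd_ediv_gcd_ediv_gcd (i := x) (j := N) hgpos
    push_cast; exact this
  refine hc.dvd_of_dvd_mul_left ?_
  obtain ⟨z, hz⟩ := h
  refine ⟨z, ?_⟩
  have h1 : (Int.gcd x N : ℤ) * (x / Int.gcd x N) = x := Int.mul_ediv_cancel' (Int.gcd_dvd_left x N)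
  have h2 : (Int.gcd x N : ℤ) * ((N / Int.gcd x N : ℕ) : ℤ) = N := by
    exact_mod_cast Nat.mul_div_cancel' hg
  have h3 : (Int.gcd x N : ℤ) ≠ 0 := by exact_mod_cast hgpos.ne'
  apply mul_left_cancel₀ h3
  rw [← mul_assoc, h1, ← mul_assoc, h2, hz]

def fv (c₀ c₁ c₂ k : ℤ) : ℤ := k ^ 3 + c₂ * k ^ 2 + c₁ * k + c₀
def fd (c₁ c₂ k : ℤ) : ℤ := 3 * k ^ 2 + 2 * c₂ * k + c₁

def Zset (c₀ c₁ c₂ : ℤ) (N : ℕ) : Finset ℕ :=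
  (Finset.range N).filter (fun k => (N:ℤ) ∣ fv c₀ c₁ c₂ k)

theorem root_count (c₀ c₁ c₂ D : ℤ) (hD : D ≠ 0)
    (hb : ∀ m k : ℤ, m ∣ fv c₀ c₁ c₂ k → m ∣ fd c₁ c₂ k → m ∣ D) (N : ℕ) (hN : 0 < N) :
    (Zset c₀ c₁ c₂ N).card ≤ D.natAbs ^ 3 * N.divisors.card * N.divisors.card := by
  rcases (Zset c₀ c₁ c₂ N).eq_empty_or_nonempty with he | ⟨k0, hk0⟩
  · rw [he]; simp
  have hZ : ∀ k ∈ Zset c₀ c₁ c₂ N, k < N ∧ (N:ℤ) ∣ fv c₀ c₁ c₂ k := by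
    intro k hk; simpa [Zset] using hk
  have hgd : ∀ x : ℤ, Int.gcd x N ∈ N.divisors := by
    intro x
    rw [Nat.mem_divisors]
    exact ⟨by exact_mod_cast Int.gcd_dvd_right x N, hN.ne'⟩
  apply Finset.card_le_mul_card_image_of_maps_to (f := fun k : ℕ => Int.gcd ((k:ℤ) - k0) N)
  · intro k hk; exact hgd _
  intro d hd
  rcases ((Zset c₀ c₁ c₂ N).filter (fun k : ℕ => Int.gcd ((k:ℤ) - k0) N = d)).eq_empty_or_nonempty with he | ⟨k1, hk1⟩
  · rw [he]; simp
  have hdN : d ∣ N := Nat.dvd_of_mem_divisors hd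
  obtain ⟨N', hN'⟩ := hdN
  have hdpos : 0 < d := by
    rcases Nat.eq_zero_or_pos d with h | h
    · subst h; omega
    · exact h
  have hN'pos : 0 < N' := by
    rcases Nat.eq_zero_or_pos N' with h | h
    · subst h; omega
    · exact h
  have hdiv : N / d = N' := by rw [hN']; exact Nat.mul_div_cancel_left _ hdpos
  let g : ℤ → ℤ := fun k => k ^ 2 + k * k0 + k0 ^ 2 + c₂ * (k + k0) + c₁
  have hF : ∀ k ∈ (Zset c₀ c₁ c₂ N).filter (fun k : ℕ => Int.gcd ((k:ℤ) - k0) N = d),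
      k < N ∧ (N:ℤ) ∣ fv c₀ c₁ c₂ k ∧ (d:ℤ) ∣ (k:ℤ) - k0 ∧ (N':ℤ) ∣ g k := by
    intro k hk
    rw [Finset.mem_filter] at hk
    obtain ⟨hk, hkd⟩ := hk
    refine ⟨(hZ k hk).1, (hZ k hk).2, ?_, ?_⟩
    · rw [← hkd]; exact Int.gcd_dvd_left _ _
    · have := cofactor N ((k:ℤ) - k0) (g k) hN (by
        have := dvd_sub (hZ k hk).2 (hZ k0 hk0).2
        have e : ((k:ℤ) - k0) * g k = fv c₀ c₁ c₂ k - fv c₀ c₁ c₂ k0 := by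
          simp only [g, fv]; ring
        rwa [e])
      rwa [hkd, hdiv] at this
  have hF1 := hF k1 hk1
  have hdD : ∀ m : ℤ, m ∣ d → m ∣ N' → m ∣ D := by
    intro m h1 h2
    apply hb m k0
    · refine (h1.trans ?_).trans (hZ k0 hk0).2
      exact_mod_cast Dvd.intro _ hN'.symm
    · have e : fd c₁ c₂ k0 = g k1 - (k1 - k0) * (k1 + 2 * k0 + c₂) := by
        simp only [fd, g]; ring
      rw [e]
      exact dvd_sub (h2.trans hF1.2.2.2) ((h1.trans hF1.2.2.1).mul_right _)
  apply Finset.card_le_mul_card_image_of_maps_to (f := fun k : ℕ => Int.gcd ((k:ℤ) - k1) N')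
  · intro k hk
    rw [Nat.mem_divisors]
    refine ⟨?_, hN.ne'⟩
    have : Int.gcd ((k:ℤ) - k1) N' ∣ N' := by exact_mod_cast Int.gcd_dvd_right ((k:ℤ) - k1) N'
    exact this.trans (Dvd.intro_left _ hN'.symm)
  intro e _
  apply card_of_pairwise N _ hN (pow_pos (Int.natAbs_pos.2 hD) 3)
  · intro k hk
    rw [Finset.mem_filter] at hk
    exact (hF k hk.1).1
  intro k hk k' hk'
  rw [Finset.mem_filter] at hk hk'
  obtain ⟨hk, hke⟩ := hk
  obtain ⟨hk', hke'⟩ := hk'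
  have q := hF k hk
  have q' := hF k' hk'
  have heN : e ∣ N' := by rw [← hke]; exact_mod_cast Int.gcd_dvd_right ((k:ℤ) - k1) N'
  have c1 : ∀ j ∈ (Zset c₀ c₁ c₂ N).filter (fun k : ℕ => Int.gcd ((k:ℤ) - k0) N = d),
      Int.gcd ((j:ℤ) - k1) N' = e → (e:ℤ) ∣ (j:ℤ) - k1 ∧ ((N' / e : ℕ) : ℤ) ∣ (j:ℤ) + k1 + k0 + c₂ := by
    intro j hj hje
    refine ⟨by rw [← hje]; exact Int.gcd_dvd_left _ _, ?_⟩
    have := cofactor N' ((j:ℤ) - k1) (j + k1 + k0 + c₂) hN'pos (by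
      have := dvd_sub (hF j hj).2.2.2 hF1.2.2.2
      have e : ((j:ℤ) - k1) * (j + k1 + k0 + c₂) = g j - g k1 := by
        simp only [g]; ring
      rwa [e])
    rwa [hje] at this
  have r := c1 k hk hke
  have r' := c1 k' hk' hke'
  have hee : e * (N' / e) = N' := Nat.mul_div_cancel' heN
  have he'N : (((N' / e : ℕ)) : ℤ) ∣ N' := by exact_mod_cast Dvd.intro_left _ hee
  have heN2 : (e : ℤ) ∣ N' := by exact_mod_cast heN
  have T := three_dvd d e ((N'/e : ℕ) : ℤ) D ((k:ℤ) - k')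
    (hdD _ (Int.gcd_dvd_left _ _) ((Int.gcd_dvd_right _ _).trans heN2))
    (hdD _ (Int.gcd_dvd_left _ _) ((Int.gcd_dvd_right _ _).trans he'N))
    (by
      have m1 := Int.gcd_dvd_left (e:ℤ) ((N'/e : ℕ) : ℤ)
      have m2 := Int.gcd_dvd_right (e:ℤ) ((N'/e : ℕ) : ℤ)
      apply hb _ k1
      · refine ((m1.trans heN2).trans ?_).trans hF1.2.1
        exact_mod_cast Dvd.intro_left _ hN'.symm
      · have e2 : fd c₁ c₂ k1 = g k1 + (k1 - k0) * ((k + k1 + k0 + c₂) - (k - k1)) := by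
          simp only [fd, g]; ring
        rw [e2]
        exact dvd_add ((m1.trans heN2).trans hF1.2.2.2)
          ((dvd_sub (m2.trans r.2) (m1.trans r.1)).mul_left _))
    (by have := dvd_sub q.2.2.1 q'.2.2.1; simpa using this)
    (by have := dvd_sub r.1 r'.1; simpa using this)
    (by
      have := dvd_sub r.2 r'.2
      have e : (k:ℤ) + k1 + k0 + c₂ - (k' + k1 + k0 + c₂) = k - k' := by ring
      rwa [e] at this)
  have hNe : (d:ℤ) * e * ((N'/e : ℕ) : ℤ) = N := by
    rw [mul_assoc]
    have : d * (e * (N' / e)) = N := by rw [hee, ← hN']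
    exact_mod_cast this
  rw [hNe] at T
  rw [← Int.dvd_natAbs] at T ⊢
  rw [Int.natAbs_mul] at T ⊢
  simpa [Int.natAbs_pow] using T

theorem char_lower (N : ℕ) [NeZero N] (h : ZMod N) :
    4 * |(h.valMinAbs : ℝ)| / N ≤ ‖ZMod.stdAddChar h - 1‖ := by
  have hN : (0:ℝ) < N := by exact_mod_cast Nat.pos_of_ne_zero (NeZero.ne N)
  have e : ZMod.stdAddChar h = Complex.exp (Complex.I * ((2 * Real.pi * h.valMinAbs / N : ℝ) : ℂ)) := by
    conv_lhs => rw [← ZMod.coe_valMinAbs h]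
    rw [ZMod.stdAddChar_coe]
    congr 1; push_cast; ring
  rw [e, Complex.norm_exp_I_mul_ofReal_sub_one]
  have hb : (|h.valMinAbs| : ℝ) ≤ N / 2 := by
    have := ZMod.valMinAbs_mem_Ioc h
    have h1 : -(N:ℝ) < (h.valMinAbs:ℝ) * 2 := by exact_mod_cast this.1
    have h2 : (h.valMinAbs:ℝ) * 2 ≤ N := by exact_mod_cast this.2
    rw [abs_le]; constructor <;> linarith
  have hx : |Real.pi * h.valMinAbs / N| = Real.pi * |(h.valMinAbs:ℝ)| / N := by
    rw [abs_div, abs_mul, abs_of_pos Real.pi_pos, abs_of_pos hN]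
  have := Real.mul_abs_le_abs_sin (x := Real.pi * h.valMinAbs / N) (by
    rw [hx, div_le_iff₀ hN]
    nlinarith [Real.pi_pos])
  rw [hx] at this
  have e2 : 2 * Real.pi * h.valMinAbs / N / 2 = Real.pi * h.valMinAbs / N := by ring
  rw [norm_mul, e2]
  simp only [Real.norm_eq_abs, Nat.abs_ofNat]
  have e3 : 2 / Real.pi * (Real.pi * |(h.valMinAbs:ℝ)| / N) = 2 * |(h.valMinAbs:ℝ)| / N := by
    field_simp
  rw [e3] at this
  calc _ = 2 * (2 * |(h.valMinAbs:ℝ)| / N) := by ring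
    _ ≤ _ := by gcongr

theorem geo (N : ℕ) [NeZero N] (h : ZMod N) (h0 : h ≠ 0) (u v : ℤ) :
    ‖∑ a ∈ Finset.Icc u v, ZMod.stdAddChar (h * (a : ZMod N))‖ ≤ N / (2 * |(h.valMinAbs : ℝ)|) := by
  have hN : (0:ℝ) < N := by exact_mod_cast Nat.pos_of_ne_zero (NeZero.ne N)
  have hm : 0 < |(h.valMinAbs : ℝ)| := by
    rw [abs_pos]; exact_mod_cast (ZMod.valMinAbs_eq_zero h).not.2 h0
  rcases lt_or_ge v u with hv | hv
  · rw [Finset.Icc_eq_empty (by omega)]; simp; positivity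
  have tel : (∑ a ∈ Finset.Icc u v, ZMod.stdAddChar (h * (a : ZMod N))) * (ZMod.stdAddChar h - 1)
      = ZMod.stdAddChar (h * ((v + 1 : ℤ) : ZMod N)) - ZMod.stdAddChar (h * (u : ZMod N)) := by
    induction v, hv using Int.leInduction with
    | base =>
      simp [mul_add, AddChar.map_add_eq_mul]; ring
    | succ n hn ih =>
      have : Finset.Icc u (n+1) = insert (n+1) (Finset.Icc u n) := by
        ext x; simp; omega
      rw [this, Finset.sum_insert (by simp), add_mul, ih]
      push_cast
      simp only [mul_add, AddChar.map_add_eq_mul, mul_one]; ring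
  have n1 : ∀ x : ZMod N, ‖(ZMod.stdAddChar x : ℂ)‖ = 1 := by
    intro x; exact AddChar.norm_apply _ _
  have hle : ‖∑ a ∈ Finset.Icc u v, ZMod.stdAddChar (h * (a : ZMod N))‖ * ‖ZMod.stdAddChar h - 1‖ ≤ 2 := by
    rw [← norm_mul, tel]
    refine (norm_sub_le _ _).trans ?_
    rw [n1, n1]; norm_num
  have hl := char_lower N h
  rw [le_div_iff₀ (by positivity)]
  have : ‖∑ a ∈ Finset.Icc u v, ZMod.stdAddChar (h * (a : ZMod N))‖ * (4 * |(h.valMinAbs : ℝ)| / N) ≤ 2 :=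
    (mul_le_mul_of_nonneg_left hl (norm_nonneg _)).trans hle
  rw [← mul_div_assoc, div_le_iff₀ hN] at this
  linarith

theorem fourier_count (N : ℕ) [NeZero N] (k : ℤ) (I J : Finset ℤ) :
    (N : ℂ) * (((I ×ˢ J).filter (fun ab => (N:ℤ) ∣ ab.1 - ab.2 * k)).card : ℂ) =
    ∑ h : ZMod N, (∑ a ∈ I, ZMod.stdAddChar (h * (a : ZMod N))) *
      (∑ b ∈ J, ZMod.stdAddChar ((- (h * (k : ZMod N))) * (b : ZMod N))) := by
  have e : ∀ h : ZMod N, (∑ a ∈ I, ZMod.stdAddChar (h * (a : ZMod N))) *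
      (∑ b ∈ J, ZMod.stdAddChar ((- (h * (k : ZMod N))) * (b : ZMod N))) =
      ∑ ab ∈ I ×ˢ J, ZMod.stdAddChar (h * ((ab.1 - ab.2 * k : ℤ) : ZMod N)) := by
    intro h
    rw [Finset.sum_mul_sum, ← Finset.sum_product']
    apply Finset.sum_congr rfl
    intro x _
    rw [← AddChar.map_add_eq_mul]
    congr 1; push_cast; ring
  simp_rw [e]
  rw [Finset.sum_comm]
  simp_rw [AddChar.sum_mulShift _ (ZMod.isPrimitive_stdAddChar N), ZMod.card, ZMod.intCast_zmod_eq_zero_iff_dvd]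
  rw [Finset.card_filter]
  push_cast
  rw [Finset.mul_sum]
  apply Finset.sum_congr rfl
  intro x _
  split_ifs <;> simp

theorem count_err (N : ℕ) [NeZero N] (k : ℤ) (u v u' v' : ℤ) :
    |(((Finset.Icc u v ×ˢ Finset.Icc u' v').filter (fun ab => (N:ℤ) ∣ ab.1 - ab.2 * k)).card : ℝ)
      - ((Finset.Icc u v).card : ℝ) * (Finset.Icc u' v').card / N| ≤
    ∑ h ∈ Finset.univ.erase (0 : ZMod N),
      if (h * (k : ZMod N)).valMinAbs = 0 then ((Finset.Icc u' v').card : ℝ) / (2 * |(h.valMinAbs : ℝ)|)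
      else N / (4 * |(h.valMinAbs : ℝ)| * |((h * (k : ZMod N)).valMinAbs : ℝ)|) := by
  have hN : (0:ℝ) < N := by exact_mod_cast Nat.pos_of_ne_zero (NeZero.ne N)
  have F := fourier_count N k (Finset.Icc u v) (Finset.Icc u' v')
  rw [← Finset.add_sum_erase _ _ (Finset.mem_univ (0 : ZMod N))] at F
  simp only [zero_mul, AddChar.map_zero_eq_one, neg_zero, Finset.sum_const, nsmul_eq_mul, mul_one] at F
  set S := ((Finset.Icc u v ×ˢ Finset.Icc u' v').filter (fun ab => (N:ℤ) ∣ ab.1 - ab.2 * k)).card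
  set na := (Finset.Icc u v).card
  set nb := (Finset.Icc u' v').card
  have G : (((N * (S - (na:ℝ) * nb / N) : ℝ)) : ℂ) = ∑ h ∈ Finset.univ.erase (0 : ZMod N),
      (∑ a ∈ Finset.Icc u v, ZMod.stdAddChar (h * (a : ZMod N))) *
      (∑ b ∈ Finset.Icc u' v', ZMod.stdAddChar ((- (h * (k : ZMod N))) * (b : ZMod N))) := by
    have : N * (S - (na:ℝ) * nb / N) = N * S - na * nb := by field_simp
    rw [this]; push_cast; rw [F]; ring
  have G2 : N * |S - (na:ℝ) * nb / N| ≤ ∑ h ∈ Finset.univ.erase (0 : ZMod N),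
      N * (if (h * (k : ZMod N)).valMinAbs = 0 then (nb : ℝ) / (2 * |(h.valMinAbs : ℝ)|)
      else N / (4 * |(h.valMinAbs : ℝ)| * |((h * (k : ZMod N)).valMinAbs : ℝ)|)) := by
    have : N * |S - (na:ℝ) * nb / N| = ‖(((N * (S - (na:ℝ) * nb / N) : ℝ)) : ℂ)‖ := by
      rw [Complex.norm_real, Real.norm_eq_abs, abs_mul, abs_of_pos hN]
    rw [this, G]
    refine (norm_sum_le _ _).trans (Finset.sum_le_sum ?_)
    intro h hh
    have h0 : h ≠ 0 := Finset.ne_of_mem_erase hh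
    rw [norm_mul]
    have g1 := geo N h h0 u v
    split_ifs with hk
    · have g2 : ‖∑ b ∈ Finset.Icc u' v', ZMod.stdAddChar ((- (h * (k : ZMod N))) * (b : ZMod N))‖ ≤ nb := by
        refine (norm_sum_le _ _).trans ?_
        simp [AddChar.norm_apply, nb]
      calc _ ≤ N / (2 * |(h.valMinAbs : ℝ)|) * nb := by gcongr
        _ = _ := by ring
    · have hk' : h * (k : ZMod N) ≠ 0 := (ZMod.valMinAbs_eq_zero _).not.1 hk
      have g2 := geo N (-(h * (k : ZMod N))) (neg_ne_zero.2 hk') u' v'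
      have ab : |((-(h * (k : ZMod N))).valMinAbs : ℝ)| = |((h * (k : ZMod N)).valMinAbs : ℝ)| := by
        have := (ZMod.abs_valMinAbs_eq_abs_valMinAbs (a := -(h * (k : ZMod N))) (b := h * (k : ZMod N))).2 (Or.inr rfl)
        exact_mod_cast this
      rw [ab] at g2
      calc _ ≤ N / (2 * |(h.valMinAbs : ℝ)|) * (N / (2 * |((h * (k : ZMod N)).valMinAbs : ℝ)|)) := by gcongr
        _ = _ := by rw [div_mul_div_comm, mul_div_assoc']; congr 1; ring
  rw [← Finset.mul_sum] at G2
  exact le_of_mul_le_mul_left G2 hN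

theorem poly_irr (c₀ c₁ c₂ : ℤ)
    (hf : Irreducible (X ^ 3 + C c₂ * X ^ 2 + C c₁ * X + C c₀ : ℤ[X])) :
    Irreducible ((X ^ 3 + C c₂ * X ^ 2 + C c₁ * X + C c₀ : ℤ[X]).map (Int.castRingHom ℚ)) := by
  have hm : (X ^ 3 + C c₂ * X ^ 2 + C c₁ * X + C c₀ : ℤ[X]).Monic := by monicity!
  exact (hm.irreducible_iff_irreducible_map_fraction_map (K := ℚ)).1 hf

theorem hom_ne (c₀ c₁ c₂ : ℤ)
    (hf : Irreducible (X ^ 3 + C c₂ * X ^ 2 + C c₁ * X + C c₀ : ℤ[X])) (l h : ℤ) (hh : h ≠ 0) :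
    l ^ 3 + c₂ * l ^ 2 * h + c₁ * l * h ^ 2 + c₀ * h ^ 3 ≠ 0 := by
  intro H
  have hirr := poly_irr c₀ c₁ c₂ hf
  have hq : (h : ℚ) ≠ 0 := by exact_mod_cast hh
  have hroot : IsRoot ((X ^ 3 + C c₂ * X ^ 2 + C c₁ * X + C c₀ : ℤ[X]).map (Int.castRingHom ℚ)) ((l:ℚ) / h) := by
    have H' : (l:ℚ) ^ 3 + c₂ * l ^ 2 * h + c₁ * l * h ^ 2 + c₀ * h ^ 3 = 0 := by exact_mod_cast H
    rw [IsRoot.def]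
    simp
    field_simp
    linear_combination H'
  have hdeg := degree_eq_one_of_irreducible_of_root hirr hroot
  have : ((X ^ 3 + C c₂ * X ^ 2 + C c₁ * X + C c₀ : ℤ[X]).map (Int.castRingHom ℚ)).degree = 3 := by
    simp only [Polynomial.map_add, Polynomial.map_mul, Polynomial.map_pow, map_X, map_C]
    compute_degree!
  rw [this] at hdeg
  exact absurd hdeg (by decide)

theorem exists_D (c₀ c₁ c₂ : ℤ)
    (hf : Irreducible (X ^ 3 + C c₂ * X ^ 2 + C c₁ * X + C c₀ : ℤ[X])) :
    ∃ D : ℤ, D ≠ 0 ∧ ∀ m k : ℤ, m ∣ fv c₀ c₁ c₂ k → m ∣ fd c₁ c₂ k → m ∣ D := by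
  have hirr := poly_irr c₀ c₁ c₂ hf
  obtain ⟨a, b, hab⟩ := hirr.separable
  obtain ⟨s, hs, ha⟩ := IsLocalization.integerNormalization_spec (nonZeroDivisors ℤ) a
  obtain ⟨t, ht, hb⟩ := IsLocalization.integerNormalization_spec (nonZeroDivisors ℤ) b
  set a' := IsLocalization.integerNormalization (nonZeroDivisors ℤ) a
  set b' := IsLocalization.integerNormalization (nonZeroDivisors ℤ) b
  have hs0 : s ≠ 0 := nonZeroDivisors.ne_zero hs
  have ht0 : t ≠ 0 := nonZeroDivisors.ne_zero ht
  refine ⟨s * t, mul_ne_zero hs0 ht0, fun m k h1 h2 => ?_⟩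
  have key : s * t = t * a'.eval k * fv c₀ c₁ c₂ k + s * b'.eval k * fd c₁ c₂ k := by
    have e1 := congrArg (eval (k:ℚ)) hab
    have e2 := congrArg (eval (k:ℚ)) ha
    have e3 := congrArg (eval (k:ℚ)) hb
    have ev : ∀ p : ℤ[X], eval (k:ℚ) (p.map (algebraMap ℤ ℚ)) = ((p.eval k : ℤ) : ℚ) := by
      intro p
      have := Polynomial.eval_intCast_map (algebraMap ℤ ℚ) p k
      simp
    rw [ev] at e2 e3
    rw [eval_smul, zsmul_eq_mul] at e2 e3
    have : ((s * t : ℤ) : ℚ) = ((t * a'.eval k * fv c₀ c₁ c₂ k + s * b'.eval k * fd c₁ c₂ k : ℤ) : ℚ) := by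
      push_cast
      rw [e2, e3]
      simp only [fv, fd]
      push_cast
      simp at e1
      linear_combination -(s:ℚ) * t * e1
    exact_mod_cast this
  rw [key]
  exact dvd_add (h1.mul_left _) (h2.mul_left _)

section
variable {K : Type*} [Field K]

theorem exists_int_sub (r : K) (k : ℤ) (x : Zr r) :
    ∃ n : ℤ, x - (n : Zr r) ∈ Ideal.span {(k : Zr r) - rZ r} := by
  obtain ⟨p, hp⟩ : ∃ p : ℤ[X], aeval (rZ r) p = x := by
    have hx : (x : K) ∈ (Polynomial.aeval (R := ℤ) r).range :=
      (Algebra.adjoin_singleton_eq_range_aeval ℤ r).le x.2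
    obtain ⟨p, hp⟩ := hx
    refine ⟨p, Subtype.ext ?_⟩
    rw [← hp]
    have := Polynomial.aeval_algHom_apply (Zr r).val (rZ r) p
    exact this.symm
  refine ⟨p.eval k, ?_⟩
  rw [Ideal.mem_span_singleton, ← hp]
  have h1 : ((p.eval k : ℤ) : Zr r) = aeval (k : Zr r) p := by
    have := Polynomial.eval_intCast_map (algebraMap ℤ (Zr r)) p k
    simp [Polynomial.aeval_def, Polynomial.eval₂_eq_eval_map] 
  rw [h1, ← dvd_neg, neg_sub]
  exact by
    simpa only [Polynomial.eval_map_algebraMap] using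
      Polynomial.sub_dvd_eval_sub (k : Zr r) (rZ r) (p.map (algebraMap ℤ (Zr r)))

theorem int_mem (r : K) (R : Ideal (Zr r)) (k : ℤ) (hk : (k : Zr r) - rZ r ∈ R) (n : ℤ) :
    (n : Zr r) ∈ R ↔ (Nrm r R : ℤ) ∣ n := by
  let φ : ℤ →+* (Zr r ⧸ R) := Int.castRingHom _
  have hs : Function.Surjective φ := by
    intro y
    obtain ⟨x, rfl⟩ := Ideal.Quotient.mk_surjective y
    obtain ⟨n, hn⟩ := exists_int_sub r k x
    refine ⟨n, ?_⟩
    have : x - (n : Zr r) ∈ R := (Ideal.span_singleton_le_iff_mem R).2 hk hn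
    have h2 := (Ideal.Quotient.mk_eq_mk_iff_sub_mem (I := R) x (n : Zr r)).2 this
    rw [h2]; simp [φ]
  obtain ⟨m, hm⟩ : ∃ m : ℤ, RingHom.ker φ = Ideal.span {m} :=
    ⟨_, (Ideal.span_singleton_generator (RingHom.ker φ)).symm⟩
  have hc : Nrm r R = m.natAbs := by
    unfold Nrm
    rw [← Nat.card_congr (RingHom.quotientKerEquivOfSurjective hs).toEquiv, hm,
      Nat.card_congr (Int.quotientSpanEquivZMod m).toEquiv, Nat.card_zmod]
  rw [hc, Int.natAbs_dvd, ← Ideal.mem_span_singleton, ← hm, RingHom.mem_ker, ← Ideal.Quotient.eq_zero_iff_mem]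
  simp [φ]

theorem ideal_data (c₀ c₁ c₂ : ℤ)
    (hf : Irreducible (X ^ 3 + C c₂ * X ^ 2 + C c₁ * X + C c₀ : ℤ[X]))
    (r : K) (hr : aeval r (X ^ 3 + C c₂ * X ^ 2 + C c₁ * X + C c₀ : ℤ[X]) = 0)
    (R : Ideal (Zr r)) (h : rho r R = 1) :
    0 < Nrm r R ∧ ∃ k ∈ Zset c₀ c₁ c₂ (Nrm r R), ((k : ℤ) : Zr r) - rZ r ∈ R := by
  have : Nonempty {k : ZMod (Nrm r R) // ∃ n : ℤ, (n : ZMod (Nrm r R)) = k ∧ (n : Zr r) - rZ r ∈ R} := by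
    by_contra hne
    rw [not_nonempty_iff] at hne
    rw [rho, Nat.card_of_isEmpty] at h
    omega
  obtain ⟨⟨_, n, -, hn⟩⟩ := this
  have hr' : rZ r ^ 3 + (c₂ : Zr r) * rZ r ^ 2 + (c₁ : Zr r) * rZ r + (c₀ : Zr r) = 0 := by
    apply Subtype.ext
    simp [rZ]
    simpa using hr
  have hroot : ∀ k : ℤ, (k : Zr r) - rZ r ∈ R → (Nrm r R : ℤ) ∣ fv c₀ c₁ c₂ k := by
    intro k hk
    rw [← int_mem r R k hk]
    have : ((fv c₀ c₁ c₂ k : ℤ) : Zr r) = ((k : Zr r) - rZ r) *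
      ((k : Zr r)^2 + (k : Zr r) * rZ r + rZ r ^ 2 + (c₂ : Zr r) * (k + rZ r) + (c₁ : Zr r)) := by
      simp only [fv]; push_cast
      linear_combination hr'
    rw [this]
    exact R.mul_mem_right _ hk
  have hpos : 0 < Nrm r R := by
    apply Nat.pos_of_ne_zero
    intro h0
    have := hroot n hn
    rw [h0] at this
    have h1 := hom_ne c₀ c₁ c₂ hf n 1 one_ne_zero
    apply h1
    have := zero_dvd_iff.1 (by simpa using this)
    simp only [fv] at this
    linarith
  refine ⟨hpos, (n % Nrm r R).toNat, ?_⟩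
  have hnn : 0 ≤ n % (Nrm r R : ℤ) := Int.emod_nonneg _ (by omega)
  have hlt : n % (Nrm r R : ℤ) < Nrm r R := Int.emod_lt_of_pos _ (by omega)
  have hmem : ((((n % Nrm r R).toNat : ℕ) : ℤ) : Zr r) - rZ r ∈ R := by
    rw [Int.toNat_of_nonneg hnn]
    have h1 : ((n - n % (Nrm r R : ℤ) : ℤ) : Zr r) ∈ R := by
      rw [int_mem r R n hn]
      exact Int.dvd_self_sub_emod
    have := R.sub_mem hn h1
    convert this using 1
    push_cast; ring
  refine ⟨?_, hmem⟩
  rw [Zset, Finset.mem_filter, Finset.mem_range]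
  exact ⟨by omega, hroot _ hmem⟩

theorem ideal_eq (r : K) (R R' : Ideal (Zr r)) (k : ℤ) (hk : (k : Zr r) - rZ r ∈ R)
    (hk' : (k : Zr r) - rZ r ∈ R') (hN : Nrm r R = Nrm r R') : R ≤ R' := by
  intro x hx
  obtain ⟨n, hn⟩ := exists_int_sub r k x
  have h1 : x - (n : Zr r) ∈ R := (Ideal.span_singleton_le_iff_mem R).2 hk hn
  have h2 : x - (n : Zr r) ∈ R' := (Ideal.span_singleton_le_iff_mem R').2 hk' hn
  have h3 : (n : Zr r) ∈ R := by simpa using R.sub_mem hx h1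
  rw [int_mem r R k hk, hN, ← int_mem r R' k hk'] at h3
  simpa using R'.add_mem h2 h3

theorem lin_mem (r : K) (R : Ideal (Zr r)) (k : ℤ) (hk : (k : Zr r) - rZ r ∈ R) (a b : ℤ) :
    (a : Zr r) - (b : Zr r) * rZ r ∈ R ↔ (Nrm r R : ℤ) ∣ a - b * k := by
  rw [← int_mem r R k hk]
  have e : (a : Zr r) - (b : Zr r) * rZ r = ((a - b * k : ℤ) : Zr r) + (b : Zr r) * ((k : Zr r) - rZ r) := by
    push_cast; ring
  rw [e]
  exact R.add_mem_iff_left (R.mul_mem_left _ hk)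
end

noncomputable def Wt (M Y : ℝ) (x : ℤ × ℤ) : ℝ :=
  if x.2 = 0 then M / |(x.1 : ℝ)| else Y / (|(x.1 : ℝ)| * |(x.2 : ℝ)|)

noncomputable def Gs (L : ℕ) : Finset (ℤ × ℤ) :=
  ((Finset.Icc (-(L:ℤ)) L).erase 0) ×ˢ Finset.Icc (-(L:ℤ)) L

noncomputable def cnt (A B M : ℝ) (N : ℕ) (k : ℤ) : ℕ :=
  Nat.card {ab : ℤ × ℤ // A ≤ (ab.1 : ℝ) ∧ (ab.1 : ℝ) ≤ A + M ∧
              B ≤ (ab.2 : ℝ) ∧ (ab.2 : ℝ) ≤ B + M ∧ (N:ℤ) ∣ ab.1 - ab.2 * k}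

theorem Wt_nonneg (M Y : ℝ) (hM : 0 ≤ M) (hY : 0 ≤ Y) (x : ℤ × ℤ) : 0 ≤ Wt M Y x := by
  unfold Wt; split_ifs <;> positivity

theorem icc_card (A M : ℝ) (hM : 1 ≤ M) :
    |((Finset.Icc ⌈A⌉ ⌊A + M⌋).card : ℝ) - M| ≤ 1 := by
  rw [Int.card_Icc]
  have h1 := Int.floor_le (A + M)
  have h2 := Int.lt_floor_add_one (A + M)
  have h3 := Int.le_ceil A
  have h4 := Int.ceil_lt_add_one A
  have h5 : (0:ℝ) < ((⌊A+M⌋ + 1 - ⌈A⌉ : ℤ) : ℝ) + 1 := by push_cast; linarith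
  have h6 : 0 ≤ ⌊A+M⌋ + 1 - ⌈A⌉ := by
    have : (0:ℤ) < (⌊A+M⌋ + 1 - ⌈A⌉ ) + 1 := by exact_mod_cast h5
    omega
  have h7 : (((⌊A+M⌋ + 1 - ⌈A⌉).toNat : ℕ) : ℝ) = ((⌊A+M⌋ + 1 - ⌈A⌉ : ℤ) : ℝ) := by
    exact_mod_cast congrArg (Int.cast (R := ℝ)) (Int.toNat_of_nonneg h6)
  rw [h7]; push_cast
  rw [abs_le]; constructor <;> linarith

theorem cnt_eq (A B M : ℝ) (N : ℕ) (k : ℤ) : cnt A B M N k =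
    ((Finset.Icc ⌈A⌉ ⌊A+M⌋ ×ˢ Finset.Icc ⌈B⌉ ⌊B+M⌋).filter (fun ab => (N:ℤ) ∣ ab.1 - ab.2 * k)).card := by
  unfold cnt
  apply Nat.subtype_card
  rintro ⟨a, b⟩
  simp only [Finset.mem_filter, Finset.mem_product, Finset.mem_Icc, Int.ceil_le, Int.le_floor]
  tauto

theorem err_bound (A B M Y : ℝ) (hM : 1 ≤ M) (N : ℕ) (hN : 0 < N) (hNY : (N:ℝ) ≤ Y) (k : ℤ) :
    |(cnt A B M N k : ℝ) - M ^ 2 / N| ≤ 3 * M / N +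
      ∑ x ∈ (Gs ⌊Y⌋₊).filter (fun x => (N:ℤ) ∣ x.2 - x.1 * k), Wt M Y x := by
  have : NeZero N := ⟨hN.ne'⟩
  have hN' : (0:ℝ) < N := by exact_mod_cast hN
  have hY : 0 ≤ Y := hN'.le.trans hNY
  have E := count_err N k ⌈A⌉ ⌊A+M⌋ ⌈B⌉ ⌊B+M⌋
  rw [← cnt_eq] at E
  have ha := icc_card A M hM
  have hb := icc_card B M hM
  set na : ℝ := ((Finset.Icc ⌈A⌉ ⌊A+M⌋).card : ℝ)
  set nb : ℝ := ((Finset.Icc ⌈B⌉ ⌊B+M⌋).card : ℝ)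
  rw [abs_le] at ha hb
  have h1 : |na * nb / N - M ^ 2 / N| ≤ 3 * M / N := by
    rw [← sub_div, abs_div, abs_of_pos hN']
    gcongr
    rw [abs_le]; constructor <;> nlinarith
  have h2 : (∑ h ∈ Finset.univ.erase (0 : ZMod N),
      if (h * (k : ZMod N)).valMinAbs = 0 then nb / (2 * |(h.valMinAbs : ℝ)|)
      else N / (4 * |(h.valMinAbs : ℝ)| * |((h * (k : ZMod N)).valMinAbs : ℝ)|)) ≤
      ∑ x ∈ (Gs ⌊Y⌋₊).filter (fun x => (N:ℤ) ∣ x.2 - x.1 * k), Wt M Y x := by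
    let φ : ZMod N → ℤ × ℤ := fun h => (h.valMinAbs, (h * (k : ZMod N)).valMinAbs)
    have hinj : Function.Injective φ := by
      intro x y hxy
      exact ZMod.injective_valMinAbs (Prod.ext_iff.1 hxy).1
    have hLN : N ≤ ⌊Y⌋₊ := Nat.le_floor hNY
    have hbd : ∀ z : ZMod N, z.valMinAbs ∈ Finset.Icc (-(⌊Y⌋₊:ℤ)) ⌊Y⌋₊ := by
      intro z
      have := ZMod.valMinAbs_mem_Ioc z
      rw [Set.mem_Ioc] at this
      rw [Finset.mem_Icc]; omega
    calc _ ≤ ∑ h ∈ Finset.univ.erase (0 : ZMod N), Wt M Y (φ h) := by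
          apply Finset.sum_le_sum
          intro h hh
          have h0 : h ≠ 0 := Finset.ne_of_mem_erase hh
          have hm : 0 < |(h.valMinAbs : ℝ)| := by
            rw [abs_pos]; exact_mod_cast (ZMod.valMinAbs_eq_zero h).not.2 h0
          simp only [Wt, φ]
          split_ifs with hk
          · rw [div_le_div_iff₀ (by positivity) hm]
            nlinarith
          · have hm2 : 0 < |((h * (k : ZMod N)).valMinAbs : ℝ)| := by
              rw [abs_pos]; exact_mod_cast hk
            apply div_le_div₀ hY hNY (by positivity)
            nlinarith [mul_pos hm hm2]
      _ = ∑ x ∈ (Finset.univ.erase (0 : ZMod N)).image φ, Wt M Y x := by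
          rw [Finset.sum_image (fun x _ y _ h => hinj h)]
      _ ≤ _ := by
          apply Finset.sum_le_sum_of_subset_of_nonneg
          · intro x hx
            rw [Finset.mem_image] at hx
            obtain ⟨h, hh, rfl⟩ := hx
            have h0 : h ≠ 0 := Finset.ne_of_mem_erase hh
            rw [Finset.mem_filter, Gs, Finset.mem_product, Finset.mem_erase]
            refine ⟨⟨⟨(ZMod.valMinAbs_eq_zero h).not.2 h0, hbd _⟩, hbd _⟩, ?_⟩
            rw [← ZMod.intCast_zmod_eq_zero_iff_dvd]
            simp [φ]
          · intros; exact Wt_nonneg M Y (by linarith) hY _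
  have := abs_sub_le (cnt A B M N k : ℝ) (na * nb / N) (M ^ 2 / N)
  linarith

def Ts (c₀ c₁ c₂ : ℤ) (L : ℕ) : Finset (Σ _ : ℕ, ℕ) :=
  (Finset.Icc 1 L).sigma (Zset c₀ c₁ c₂)

theorem Z_bound (c₀ c₁ c₂ : ℤ)
    (hf : Irreducible (X ^ 3 + C c₂ * X ^ 2 + C c₁ * X + C c₀ : ℤ[X])) (δ : ℝ) (hδ : 0 < δ) :
    ∃ c : ℝ, 0 ≤ c ∧ ∀ Y : ℝ, 2 ≤ Y → ∀ N ∈ Finset.Icc 1 ⌊Y⌋₊, ((Zset c₀ c₁ c₂ N).card : ℝ) ≤ c * Y ^ δ := by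
  obtain ⟨D, hD, hb⟩ := exists_D c₀ c₁ c₂ hf
  obtain ⟨c, hc, hdv⟩ := div_bound (δ/2) (by positivity)
  refine ⟨(D.natAbs:ℝ) ^ 3 * c * c, by positivity, fun Y hY N hN => ?_⟩
  rw [Finset.mem_Icc] at hN
  have h1 := root_count c₀ c₁ c₂ D hD hb N hN.1
  have h2 := hdv N (by omega)
  have h3 : (N:ℝ) ≤ Y := (Nat.le_floor_iff (by linarith)).1 hN.2
  have h4 : (N:ℝ) ^ (δ/2) ≤ Y ^ (δ/2) := by gcongr
  have h5 : (N.divisors.card : ℝ) ≤ c * Y ^ (δ/2) := h2.trans (by gcongr)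
  have h6 : Y ^ δ = Y ^ (δ/2) * Y ^ (δ/2) := by
    rw [← Real.rpow_add (by linarith)]; congr 1; ring
  calc ((Zset c₀ c₁ c₂ N).card : ℝ) ≤ (D.natAbs:ℝ) ^ 3 * N.divisors.card * N.divisors.card := by exact_mod_cast h1
    _ ≤ (D.natAbs:ℝ) ^ 3 * (c * Y ^ (δ/2)) * (c * Y ^ (δ/2)) := by gcongr
    _ = _ := by rw [h6]; ring

theorem T_bound (c₀ c₁ c₂ : ℤ)
    (hf : Irreducible (X ^ 3 + C c₂ * X ^ 2 + C c₁ * X + C c₀ : ℤ[X])) (δ : ℝ) (hδ : 0 < δ) :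
    ∃ c : ℝ, 0 ≤ c ∧ ∀ Y : ℝ, 2 ≤ Y → ∀ x ∈ Gs ⌊Y⌋₊,
      (((Ts c₀ c₁ c₂ ⌊Y⌋₊).filter (fun t => (t.1:ℤ) ∣ x.2 - x.1 * (t.2:ℤ))).card : ℝ) ≤ c * Y ^ δ := by
  obtain ⟨c, hc, hZ⟩ := Z_bound c₀ c₁ c₂ hf (δ/2) (by positivity)
  obtain ⟨c', hc', hdv⟩ := div_bound (δ/6) (by positivity)
  set s : ℝ := 1 + |(c₂:ℝ)| + |(c₁:ℝ)| + |(c₀:ℝ)| with hs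
  have hs0 : 0 ≤ s := by positivity
  refine ⟨c' * s ^ (δ/6) * c, by positivity, ?_⟩
  rintro Y hY ⟨h, l⟩ hx
  have hY0 : 0 ≤ Y := by linarith
  simp only [Gs, Finset.mem_product, Finset.mem_erase, Finset.mem_Icc] at hx
  obtain ⟨⟨hh, hh1, hh2⟩, hl1, hl2⟩ := hx
  have hfl : (⌊Y⌋₊:ℝ) ≤ Y := Nat.floor_le hY0
  have habs : ∀ z : ℤ, -(⌊Y⌋₊:ℤ) ≤ z → z ≤ ⌊Y⌋₊ → |(z:ℝ)| ≤ Y := by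
    intro z h1 h2
    have h1' : -(⌊Y⌋₊:ℝ) ≤ z := by exact_mod_cast h1
    have h2' : (z:ℝ) ≤ ⌊Y⌋₊ := by exact_mod_cast h2
    rw [abs_le]; constructor <;> linarith
  have ah := habs h hh1 hh2
  have al := habs l hl1 hl2
  have hF := hom_ne c₀ c₁ c₂ hf l h hh
  set F := l ^ 3 + c₂ * l ^ 2 * h + c₁ * l * h ^ 2 + c₀ * h ^ 3 with hFdef
  have hFb : (F.natAbs : ℝ) ≤ s * Y ^ 3 := by
    have e : (F.natAbs : ℝ) = |(F:ℝ)| := by rw [← Int.cast_abs, Int.abs_eq_natAbs]; simp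
    rw [e, hFdef]; push_cast
    calc _ ≤ |(l:ℝ)^3| + |(c₂:ℝ) * l^2 * h| + |(c₁:ℝ) * l * h^2| + |(c₀:ℝ) * h^3| := by
          refine (abs_add_le _ _).trans ?_
          gcongr
          refine (abs_add_le _ _).trans ?_
          gcongr
          exact abs_add_le _ _
      _ ≤ Y^3 + |(c₂:ℝ)| * Y^2 * Y + |(c₁:ℝ)| * Y * Y^2 + |(c₀:ℝ)| * Y^3 := by
          simp only [abs_mul, abs_pow]
          gcongr
      _ = s * Y^3 := by rw [hs]; ring
  have sub : (Ts c₀ c₁ c₂ ⌊Y⌋₊).filter (fun t => (t.1:ℤ) ∣ l - h * (t.2:ℤ)) ⊆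
      (F.natAbs.divisors.filter (· ∈ Finset.Icc 1 ⌊Y⌋₊)).sigma (Zset c₀ c₁ c₂) := by
    rintro ⟨N, k⟩ ht
    simp only [Finset.mem_filter, Ts, Finset.mem_sigma] at ht
    simp only [Finset.mem_filter, Finset.mem_sigma, Nat.mem_divisors]
    obtain ⟨⟨hN, hk⟩, hd⟩ := ht
    refine ⟨⟨⟨?_, by simpa using hF⟩, hN⟩, hk⟩
    have hk2 : (N:ℤ) ∣ fv c₀ c₁ c₂ k := by
      rw [Zset, Finset.mem_filter] at hk; exact hk.2
    rw [← Int.natCast_dvd]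
    have : F = (l - h * k) * (l^2 + l * (h * k) + (h*k)^2 + c₂ * h * (l + h * k) + c₁ * h^2)
        + h ^ 3 * fv c₀ c₁ c₂ k := by
      rw [hFdef, fv]; ring
    rw [this]
    exact dvd_add (hd.mul_right _) (hk2.mul_left _)
  have h1 := Finset.card_le_card sub
  rw [Finset.card_sigma] at h1
  have h2 := hdv F.natAbs (by simpa using hF)
  have h3 : (s * Y ^ 3) ^ (δ/6) = s ^ (δ/6) * Y ^ (δ/2) := by
    rw [Real.mul_rpow hs0 (by positivity), ← Real.rpow_natCast, ← Real.rpow_mul hY0]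
    congr 2; push_cast; ring
  have h6 : Y ^ δ = Y ^ (δ/2) * Y ^ (δ/2) := by
    rw [← Real.rpow_add (by linarith)]; congr 1; ring
  calc (((Ts c₀ c₁ c₂ ⌊Y⌋₊).filter (fun t => (t.1:ℤ) ∣ l - h * (t.2:ℤ))).card : ℝ)
      ≤ ∑ N ∈ F.natAbs.divisors.filter (· ∈ Finset.Icc 1 ⌊Y⌋₊), ((Zset c₀ c₁ c₂ N).card : ℝ) := by
        exact_mod_cast h1
    _ ≤ ∑ N ∈ F.natAbs.divisors.filter (· ∈ Finset.Icc 1 ⌊Y⌋₊), c * Y ^ (δ/2) := by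
        apply Finset.sum_le_sum
        intro N hN
        exact hZ Y hY N (Finset.mem_filter.1 hN).2
    _ ≤ F.natAbs.divisors.card * (c * Y ^ (δ/2)) := by
        rw [Finset.sum_const, nsmul_eq_mul]
        gcongr
        exact Finset.filter_subset _ _
    _ ≤ (c' * (s * Y ^ 3) ^ (δ/6)) * (c * Y ^ (δ/2)) := by
        gcongr
        exact h2.trans (by gcongr)
    _ = _ := by rw [h3, h6]; ring

theorem harm_bound (δ : ℝ) (hδ : 0 < δ) : ∃ c : ℝ, 0 ≤ c ∧ ∀ Y : ℝ, 2 ≤ Y →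
    (∑ n ∈ Finset.Icc 1 ⌊Y⌋₊, 1 / (n:ℝ)) ≤ c * Y ^ δ ∧
    (∑ h ∈ (Finset.Icc (-(⌊Y⌋₊:ℤ)) ⌊Y⌋₊).erase 0, 1 / |(h:ℝ)|) ≤ c * Y ^ δ := by
  refine ⟨2 * (1 + 1/δ), by positivity, fun Y hY => ?_⟩
  set L := ⌊Y⌋₊
  have hL1 : 1 ≤ L := Nat.le_floor (by norm_num; linarith)
  have hLY : (L:ℝ) ≤ Y := Nat.floor_le (by linarith)
  have H : (∑ n ∈ Finset.Icc 1 L, 1 / (n:ℝ)) ≤ (1 + 1/δ) * Y ^ δ := by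
    have h1 := harmonic_le_one_add_log L
    rw [harmonic_eq_sum_Icc] at h1
    push_cast at h1
    have h2 : Real.log L ≤ Real.log Y := Real.log_le_log (by exact_mod_cast hL1) hLY
    have h3 := Real.log_le_rpow_div (x := Y) (by linarith) hδ
    have h4 : 1 ≤ Y ^ δ := Real.one_le_rpow (by linarith) hδ.le
    simp only [one_div] at h1 ⊢
    calc _ ≤ _ := h1
      _ ≤ Y ^ δ + Y ^ δ / δ := by linarith
      _ = _ := by ring
  have Hn : 0 ≤ (∑ n ∈ Finset.Icc 1 L, 1 / (n:ℝ)) := Finset.sum_nonneg (fun _ _ => by positivity)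
  refine ⟨by linarith, ?_⟩
  have : (∑ h ∈ (Finset.Icc (-(L:ℤ)) L).erase 0, 1 / |(h:ℝ)|) ≤
      (∑ n ∈ Finset.Icc 1 L, 1 / (n:ℝ)) + (∑ n ∈ Finset.Icc 1 L, 1 / (n:ℝ)) := by
    calc _ ≤ ∑ h ∈ (Finset.Icc 1 L).image (fun n : ℕ => (n:ℤ)) ∪ (Finset.Icc 1 L).image (fun n : ℕ => -(n:ℤ)), 1 / |(h:ℝ)| := by
          apply Finset.sum_le_sum_of_subset_of_nonneg
          · intro z hz
            simp only [Finset.mem_erase, Finset.mem_Icc] at hz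
            simp only [Finset.mem_union, Finset.mem_image, Finset.mem_Icc]
            rcases lt_or_gt_of_ne hz.1 with h | h
            · right; exact ⟨z.natAbs, by omega, by omega⟩
            · left; exact ⟨z.natAbs, by omega, by omega⟩
          · intros; positivity
      _ ≤ (∑ h ∈ (Finset.Icc 1 L).image (fun n : ℕ => (n:ℤ)), 1 / |(h:ℝ)|) +
          ∑ h ∈ (Finset.Icc 1 L).image (fun n : ℕ => -(n:ℤ)), 1 / |(h:ℝ)| := by
          rw [← Finset.sum_union_inter]
          have : 0 ≤ ∑ h ∈ (Finset.Icc 1 L).image (fun n : ℕ => (n:ℤ)) ∩ (Finset.Icc 1 L).image (fun n : ℕ => -(n:ℤ)), 1 / |(h:ℝ)| :=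
            Finset.sum_nonneg (fun _ _ => by positivity)
          linarith
      _ = _ := by
          rw [Finset.sum_image (by intro a _ b _ h; simpa using h), Finset.sum_image (by intro a _ b _ h; simpa using h)]
          simp
  linarith

theorem total_bound (c₀ c₁ c₂ : ℤ)
    (hf : Irreducible (X ^ 3 + C c₂ * X ^ 2 + C c₁ * X + C c₀ : ℤ[X])) (ε : ℝ) (hε : 0 < ε) :
    ∃ Cc : ℝ, ∀ A B : ℝ, ∀ M : ℝ, 1 ≤ M → ∀ Y : ℝ, 2 ≤ Y →
      ∑ t ∈ Ts c₀ c₁ c₂ ⌊Y⌋₊, |(cnt A B M t.1 t.2 : ℝ) - M ^ 2 / (t.1:ℝ)| ≤ Cc * (M + Y) * Y ^ ε := by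
  set δ := ε / 3 with hδ
  have hδ0 : 0 < δ := by positivity
  obtain ⟨c, hc, hZ⟩ := Z_bound c₀ c₁ c₂ hf δ hδ0
  obtain ⟨c', hc', hT⟩ := T_bound c₀ c₁ c₂ hf δ hδ0
  obtain ⟨a, ha, hH⟩ := harm_bound δ hδ0
  refine ⟨3 * c * a + c' * (a + a ^ 2), fun A B M hM Y hY => ?_⟩
  have hZ := hZ Y hY
  have hT := hT Y hY
  obtain ⟨hH1, hH2⟩ := hH Y hY
  have hQ : Y ^ ε = (Y ^ δ) ^ 3 := by
    rw [← Real.rpow_natCast, ← Real.rpow_mul (by linarith)]; congr 1; rw [hδ]; push_cast; ring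
  have hQ1 : 1 ≤ Y ^ δ := Real.one_le_rpow (by linarith) hδ0.le
  rw [hQ]
  set Q := Y ^ δ
  have s1 : ∑ t ∈ Ts c₀ c₁ c₂ ⌊Y⌋₊, |(cnt A B M t.1 t.2 : ℝ) - M ^ 2 / (t.1:ℝ)| ≤
      ∑ t ∈ Ts c₀ c₁ c₂ ⌊Y⌋₊, (3 * M / t.1 +
      ∑ x ∈ (Gs ⌊Y⌋₊).filter (fun x => (t.1:ℤ) ∣ x.2 - x.1 * (t.2:ℤ)), Wt M Y x) := by
    apply Finset.sum_le_sum
    rintro ⟨N, k⟩ ht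
    simp only [Ts, Finset.mem_sigma, Finset.mem_Icc] at ht
    exact err_bound A B M Y hM N ht.1.1 ((Nat.le_floor_iff (by linarith)).1 ht.1.2) k
  rw [Finset.sum_add_distrib] at s1
  have s2 : ∑ t ∈ Ts c₀ c₁ c₂ ⌊Y⌋₊, 3 * M / (t.1:ℝ) ≤ 3 * M * (c * Q) * (a * Q) := by
    rw [Ts, Finset.sum_sigma]
    simp only [Finset.sum_const, nsmul_eq_mul]
    calc _ ≤ ∑ N ∈ Finset.Icc 1 ⌊Y⌋₊, (3 * M * (c * Q)) * (1 / (N:ℝ)) := by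
          apply Finset.sum_le_sum
          intro N hN
          calc _ ≤ (c * Q) * (3 * M / N) := by gcongr; exact hZ N hN
            _ = _ := by ring
      _ ≤ _ := by
          rw [← Finset.mul_sum]
          gcongr
  have s3 : ∑ t ∈ Ts c₀ c₁ c₂ ⌊Y⌋₊, ∑ x ∈ (Gs ⌊Y⌋₊).filter (fun x => (t.1:ℤ) ∣ x.2 - x.1 * (t.2:ℤ)), Wt M Y x
      ≤ (c' * Q) * ∑ x ∈ Gs ⌊Y⌋₊, Wt M Y x := by
    simp_rw [Finset.sum_filter]
    rw [Finset.sum_comm, Finset.mul_sum]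
    apply Finset.sum_le_sum
    intro x hx
    rw [← Finset.sum_filter, Finset.sum_const, nsmul_eq_mul]
    exact mul_le_mul_of_nonneg_right (hT x hx) (Wt_nonneg M Y (by linarith) (by linarith) x)
  have s4 : ∑ x ∈ Gs ⌊Y⌋₊, Wt M Y x ≤ (a * Q) * (M + Y * (a * Q)) := by
    rw [Gs, Finset.sum_product]
    calc _ ≤ ∑ h ∈ (Finset.Icc (-(⌊Y⌋₊:ℤ)) ⌊Y⌋₊).erase 0, (1 / |(h:ℝ)|) * (M + Y * (a * Q)) := by
          apply Finset.sum_le_sum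
          intro h hh
          have m0 : (0:ℤ) ∈ Finset.Icc (-(⌊Y⌋₊:ℤ)) ⌊Y⌋₊ := by simp
          rw [← Finset.add_sum_erase _ _ m0]
          have e1 : Wt M Y (h, 0) = (1 / |(h:ℝ)|) * M := by simp [Wt]; ring
          have e2 : ∑ l ∈ (Finset.Icc (-(⌊Y⌋₊:ℤ)) ⌊Y⌋₊).erase 0, Wt M Y (h, l) =
              (1 / |(h:ℝ)|) * (Y * ∑ l ∈ (Finset.Icc (-(⌊Y⌋₊:ℤ)) ⌊Y⌋₊).erase 0, 1 / |(l:ℝ)|) := by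
            rw [Finset.mul_sum, Finset.mul_sum]
            apply Finset.sum_congr rfl
            intro l hl
            have : l ≠ 0 := Finset.ne_of_mem_erase hl
            simp only [Wt, this, if_false]
            rw [div_mul_eq_div_div]; ring
          rw [e1, e2, ← mul_add]
          gcongr
      _ ≤ _ := by
          rw [← Finset.sum_mul]
          gcongr
  have Q0 : 0 ≤ Q := by linarith
  have s5 : (c' * Q) * ∑ x ∈ Gs ⌊Y⌋₊, Wt M Y x ≤ (c' * Q) * ((a * Q) * (M + Y * (a * Q))) := by gcongr
  have Q23 : Q ^ 2 ≤ Q ^ 3 := by gcongr <;> norm_num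
  calc _ ≤ 3 * M * (c * Q) * (a * Q) + (c' * Q) * ((a * Q) * (M + Y * (a * Q))) := by linarith
    _ = 3 * c * a * M * Q^2 + c' * a * M * Q^2 + c' * a^2 * Y * Q^3 := by ring
    _ ≤ 3 * c * a * (M + Y) * Q^3 + c' * a * (M + Y) * Q^3 + c' * a^2 * (M + Y) * Q^3 := by
        gcongr <;> linarith
    _ = _ := by ring

open Classical in
/-- For every `ε > 0` there is a constant `C` (depending only on `f` and
`ε`) such that for all reals `A, B`, all `M ≥ 1` and all `X ≥ 2`: with
`S(R) = #{(a, b) ∈ ℤ² : A ≤ a ≤ A + M, B ≤ b ≤ B + M, a − b·r ∈ R}`, one has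
`∑_{R : N(R) ≤ X, ρ(R) = 1} |S(R) − M²/N(R)| ≤ C·(M + X)·X^ε`, the sum being over nonzero
ideals `R` of `ℤ[r]` with `N(R) ≤ X` and `ρ(R) = 1`. -/
theorem stmt_19 (c₀ c₁ c₂ : ℤ)
    (hf : Irreducible (X ^ 3 + C c₂ * X ^ 2 + C c₁ * X + C c₀ : ℤ[X]))
    (K : Type*) [Field K] [NumberField K] (r : K)
    (hr : aeval r (X ^ 3 + C c₂ * X ^ 2 + C c₁ * X + C c₀ : ℤ[X]) = 0)
    (hgen : Algebra.adjoin ℚ {r} = ⊤) :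
    ∀ ε > (0 : ℝ), ∃ Cc : ℝ, ∀ A B : ℝ, ∀ M : ℝ, 1 ≤ M → ∀ Y : ℝ, 2 ≤ Y →
      (∑ᶠ R : Ideal (Zr r),
        if R ≠ ⊥ ∧ (Nrm r R : ℝ) ≤ Y ∧ rho r R = 1 then
          |(Nat.card {ab : ℤ × ℤ // A ≤ (ab.1 : ℝ) ∧ (ab.1 : ℝ) ≤ A + M ∧
              B ≤ (ab.2 : ℝ) ∧ (ab.2 : ℝ) ≤ B + M ∧
              (ab.1 : Zr r) - (ab.2 : Zr r) * rZ r ∈ R} : ℝ) - M ^ 2 / (Nrm r R : ℝ)|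
        else 0) ≤ Cc * (M + Y) * Y ^ ε := by
  intro ε hε
  obtain ⟨Cc, h⟩ := total_bound c₀ c₁ c₂ hf ε hε
  refine ⟨Cc, fun A B M hM Y hY => le_trans ?_ (h A B M hM Y hY)⟩
  have hdata : ∀ R : Ideal (Zr r), ∃ k : ℕ, rho r R = 1 → 0 < Nrm r R ∧
      k ∈ Zset c₀ c₁ c₂ (Nrm r R) ∧ ((k : ℤ) : Zr r) - rZ r ∈ R := by
    intro R
    by_cases hR : rho r R = 1
    · obtain ⟨h0, k, hk, hk'⟩ := ideal_data c₀ c₁ c₂ hf r hr R hR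
      exact ⟨k, fun _ => ⟨h0, hk, hk'⟩⟩
    · exact ⟨0, fun h => absurd h hR⟩
  choose κ hκ using hdata
  let φ : Ideal (Zr r) → (Σ _ : ℕ, ℕ) := fun R => ⟨Nrm r R, κ R⟩
  let P : Set (Ideal (Zr r)) := {R | R ≠ ⊥ ∧ (Nrm r R : ℝ) ≤ Y ∧ rho r R = 1}
  have hinj : Set.InjOn φ P := by
    intro R hR R' hR' he
    have e1 : Nrm r R = Nrm r R' := congrArg Sigma.fst he
    have e2 : κ R = κ R' := by
      have := (Sigma.mk.inj_iff.1 he).2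
      exact eq_of_heq this
    have k1 := (hκ R hR.2.2).2.2
    have k2 := (hκ R' hR'.2.2).2.2
    rw [← e2] at k2
    exact le_antisymm (ideal_eq r R R' _ k1 k2 e1) (ideal_eq r R' R _ k2 k1 e1.symm)
  have hmaps : ∀ R ∈ P, φ R ∈ Ts c₀ c₁ c₂ ⌊Y⌋₊ := by
    intro R hR
    have := hκ R hR.2.2
    simp only [Ts, Finset.mem_sigma, Finset.mem_Icc, φ]
    exact ⟨⟨this.1, Nat.le_floor hR.2.1⟩, this.2.1⟩
  have hfin : P.Finite := by
    apply Set.Finite.of_finite_image _ hinj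
    apply Set.Finite.subset (Ts c₀ c₁ c₂ ⌊Y⌋₊).finite_toSet
    rintro _ ⟨R, hR, rfl⟩
    exact hmaps R hR
  rw [finsum_eq_sum_of_support_subset (s := hfin.toFinset) _ (by
    intro R hR
    rw [Function.mem_support] at hR
    rw [Set.Finite.coe_toFinset]
    by_contra hn
    exact hR (if_neg hn))]
  calc _ = ∑ R ∈ hfin.toFinset, |(cnt A B M (φ R).1 (φ R).2 : ℝ) - M ^ 2 / ((φ R).1:ℝ)| := by
        apply Finset.sum_congr rfl
        intro R hR
        rw [Set.Finite.mem_toFinset] at hR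
        have hR' : R ≠ ⊥ ∧ (Nrm r R : ℝ) ≤ Y ∧ rho r R = 1 := hR
        rw [if_pos hR']
        have k1 := (hκ R hR.2.2).2.2
        simp only [cnt, φ, lin_mem r R _ k1]
    _ = ∑ t ∈ hfin.toFinset.image φ, |(cnt A B M t.1 t.2 : ℝ) - M ^ 2 / (t.1:ℝ)| := by
        rw [Finset.sum_image]
        intro R hR R' hR' he
        exact hinj (by simpa using hR) (by simpa using hR') he
    _ ≤ _ := by
        apply Finset.sum_le_sum_of_subset_of_nonneg
        · intro t ht
          rw [Finset.mem_image] at ht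
          obtain ⟨R, hR, rfl⟩ := ht
          exact hmaps R (by simpa using hR)
        · intros; exact abs_nonneg _
end
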